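/- Assume the stated hypotheses on Ω and u, and let a ∈ ∂Ω be a GBU point. Then the final profile is more singular in the tangential direction: for every K > 0 there exists η > 0 such that for every boundary point x ∈ ∂Ω with 0 < |x − a| < η one has liminf_{t→T⁻} u_ν(x,t) ≥ K |x − a|^{−β} (here u_ν(x,t) = ∇u(x,t)·ν_x is defined for t < T since u is C¹ in space up to the boundary for t < T). In particular |x − a|^β u_ν(x,T) → ∞ as x → a along ∂Ω, where u_ν(x,T) := lim_{t→T⁻} u_ν(x,t) ∈ (−∞, ∞]. -/

import Mathlib

open Set Metric Filter RealInnerProductSpace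

noncomputable section

set_option linter.unusedVariables false

/-- A set `Ω ⊆ ℝⁿ` has boundary of class `C²`: near each boundary point, `Ω` is the strict
sublevel set of a `C²` function with nonvanishing gradient (equivalently, after a rigid motion,
the boundary is locally the graph of a `C²` function with `Ω` strictly on one side). -/
def IsC2Boundary {n : ℕ} (Ω : Set (EuclideanSpace ℝ (Fin n))) : Prop :=
  ∀ x ∈ frontier Ω, ∃ f : EuclideanSpace ℝ (Fin n) → ℝ, ∃ U ∈ nhds x,
    ContDiffOn ℝ 2 f U ∧ (∀ y ∈ U, fderiv ℝ f y ≠ 0) ∧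
    U ∩ Ω = U ∩ {y | f y < 0} ∧ U ∩ frontier Ω = U ∩ {y | f y = 0}

/-- Shorthand for Euclidean space. -/
abbrev EE (n : ℕ) := EuclideanSpace ℝ (Fin n)

/-- Trace of a bounded operator in the standard basis. -/
def lap {n : ℕ} (A : EE n →L[ℝ] EE n) : ℝ :=
  ∑ i : Fin n, ⟪A (EuclideanSpace.single i (1 : ℝ)), EuclideanSpace.single i (1 : ℝ)⟫

lemma lap_add {n : ℕ} (A B : EE n →L[ℝ] EE n) : lap (A + B) = lap A + lap B := by
  simp [lap, inner_add_left, Finset.sum_add_distrib]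

lemma lap_smul {n : ℕ} (c : ℝ) (A : EE n →L[ℝ] EE n) : lap (c • A) = c * lap A := by
  simp only [lap, smul_apply, inner_smul_left, Finset.mul_sum]
  simp

lemma lap_id {n : ℕ} : lap (ContinuousLinearMap.id ℝ (EE n)) = n := by
  simp [lap]

lemma lap_zero {n : ℕ} : lap (0 : EE n →L[ℝ] EE n) = 0 := by
  simp [lap]

lemma lap_eq_trace {n : ℕ} (A : EE n →L[ℝ] EE n) :
    lap A = LinearMap.trace ℝ (EE n) (A : EE n →ₗ[ℝ] EE n) := by
  rw [LinearMap.trace_eq_sum_inner _ (EuclideanSpace.basisFun (Fin n) ℝ)]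
  simp only [lap, EuclideanSpace.basisFun_apply]
  refine Finset.sum_congr rfl fun i _ => ?_
  rw [real_inner_comm]; rfl

lemma lap_rank_one {n : ℕ} (v : EE n) : lap ((innerSL ℝ v).smulRight v) = ‖v‖ ^ 2 := by
  simp only [lap, ContinuousLinearMap.smulRight_apply, innerSL_apply_apply, inner_smul_left]
  have := (EuclideanSpace.basisFun (Fin n) ℝ).sum_sq_norm_inner_right v
  rw [← this]
  refine Finset.sum_congr rfl fun i _ => ?_
  rw [EuclideanSpace.basisFun_apply, real_inner_comm v]
  simp [sq]

lemma lap_conj {n : ℕ} (σ : EE n ≃ₗᵢ[ℝ] EE n) (hσ : ∀ x, σ (σ x) = x)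
    (A : EE n →L[ℝ] EE n) :
    lap ((σ.toContinuousLinearEquiv : EE n →L[ℝ] EE n).comp
      (A.comp (σ.toContinuousLinearEquiv : EE n →L[ℝ] EE n))) = lap A := by
  rw [lap_eq_trace, lap_eq_trace]
  have h1 : (((σ.toContinuousLinearEquiv : EE n →L[ℝ] EE n).comp
      (A.comp (σ.toContinuousLinearEquiv : EE n →L[ℝ] EE n)) : EE n →L[ℝ] EE n) : EE n →ₗ[ℝ] EE n)
      = (σ.toLinearEquiv : EE n →ₗ[ℝ] EE n) ∘ₗ ((A : EE n →ₗ[ℝ] EE n) ∘ₗ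
        (σ.toLinearEquiv : EE n →ₗ[ℝ] EE n)) := by
    ext; rfl
  rw [h1, LinearMap.trace_comp_comm']
  congr 1
  ext x : 1
  simp [hσ]

lemma lap_abs_le {n : ℕ} (A : EE n →L[ℝ] EE n) : |lap A| ≤ n * ‖A‖ := by
  unfold lap
  refine (Finset.abs_sum_le_sum_abs _ _).trans ?_
  have : ∀ i ∈ (Finset.univ : Finset (Fin n)), |⟪A (EuclideanSpace.single i (1 : ℝ)),
      (EuclideanSpace.single i (1 : ℝ) : EE n)⟫| ≤ ‖A‖ := by
    intro i _
    refine (abs_real_inner_le_norm _ _).trans ?_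
    have := A.le_opNorm (EuclideanSpace.single i (1 : ℝ))
    simpa using this
  refine (Finset.sum_le_sum this).trans ?_
  simp

/-- `g` is twice differentiable at `x` with gradient `q` and Laplacian `l`. -/
def Jet {n : ℕ} (g : EE n → ℝ) (x q : EE n) (l : ℝ) : Prop :=
  ∃ (Gf : EE n → EE n) (A : EE n →L[ℝ] EE n),
    (∀ᶠ y in nhds x, HasFDerivAt g (innerSL ℝ (Gf y)) y) ∧ HasFDerivAt Gf A x ∧
    Gf x = q ∧ lap A = l

namespace Jet
variable {n : ℕ} {g g₁ g₂ : EE n → ℝ} {x q q₁ q₂ : EE n} {l l₁ l₂ : ℝ}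

lemma hasFDerivAt (h : Jet g x q l) : HasFDerivAt g (innerSL ℝ q) x := by
  obtain ⟨Gf, A, h1, h2, rfl, h4⟩ := h
  exact h1.self_of_nhds

lemma continuousAt (h : Jet g x q l) : ContinuousAt g x := h.hasFDerivAt.continuousAt

lemma add (h₁ : Jet g₁ x q₁ l₁) (h₂ : Jet g₂ x q₂ l₂) :
    Jet (fun y => g₁ y + g₂ y) x (q₁ + q₂) (l₁ + l₂) := by
  obtain ⟨Gf, A, h1, h2, rfl, rfl⟩ := h₁
  obtain ⟨Gf', A', h1', h2', rfl, rfl⟩ := h₂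
  refine ⟨fun y => Gf y + Gf' y, A + A', ?_, h2.add h2', rfl, lap_add _ _⟩
  filter_upwards [h1, h1'] with y hy hy'
  rw [map_add]
  exact hy.add hy'

lemma const_mul (c : ℝ) (h₁ : Jet g x q l) :
    Jet (fun y => c * g y) x (c • q) (c * l) := by
  obtain ⟨Gf, A, h1, h2, rfl, rfl⟩ := h₁
  refine ⟨fun y => c • Gf y, c • A, ?_, h2.const_smul c, rfl, lap_smul _ _⟩
  filter_upwards [h1] with y hy
  rw [map_smul]
  exact hy.const_mul c

lemma sub (h₁ : Jet g₁ x q₁ l₁) (h₂ : Jet g₂ x q₂ l₂) :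
    Jet (fun y => g₁ y - g₂ y) x (q₁ - q₂) (l₁ - l₂) := by
  have := h₁.add (h₂.const_mul (-1))
  convert this using 1
  · ext y; ring
  · simp [sub_eq_add_neg]
  · ring

lemma const (c : ℝ) : Jet (fun _ : EE n => c) x 0 0 := by
  refine ⟨fun _ => 0, 0, ?_, hasFDerivAt_const _ _, rfl, lap_zero⟩
  filter_upwards with y
  rw [map_zero]
  exact hasFDerivAt_const _ _

lemma sqdist (b : EE n) : Jet (fun y => ‖y - b‖ ^ 2) x ((2 : ℝ) • (x - b)) (2 * n) := by
  refine ⟨fun y => (2 : ℝ) • (y - b), (2 : ℝ) • ContinuousLinearMap.id ℝ (EE n), ?_, ?_, rfl, ?_⟩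
  · filter_upwards with y
    have := ((hasFDerivAt_id y).sub_const b).norm_sq
    refine HasFDerivAt.congr_fderiv this ?_
    ext v
    simp [inner_smul_left]
  · exact ((hasFDerivAt_id x).sub_const b).const_smul (2 : ℝ)
  · rw [lap_smul, lap_id]

lemma linear (b e : EE n) : Jet (fun y => ⟪y - b, e⟫) x e 0 := by
  refine ⟨fun y => e, 0, ?_, hasFDerivAt_const _ _, rfl, lap_zero⟩
  filter_upwards with y
  have := ((hasFDerivAt_id y).sub_const b).inner ℝ (hasFDerivAt_const e y)
  refine HasFDerivAt.congr_fderiv this ?_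
  ext v
  simp [real_inner_comm]

lemma sq (h : Jet g x q l) :
    Jet (fun y => g y ^ 2) x ((2 * g x) • q) (2 * g x * l + 2 * ‖q‖ ^ 2) := by
  obtain ⟨Gf, A, h1, h2, rfl, rfl⟩ := h
  have hg := h1.self_of_nhds
  refine ⟨fun y => (2 * g y) • Gf y,
    (2 * g x) • A + (2 : ℝ) • (innerSL ℝ (Gf x)).smulRight (Gf x), ?_, ?_, rfl, ?_⟩
  · filter_upwards [h1] with y hy
    have := hy.pow 2
    refine HasFDerivAt.congr_fderiv this ?_
    ext v
    simp [inner_smul_left]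
  · have := (hg.const_mul (2 : ℝ)).smul h2
    refine HasFDerivAt.congr_fderiv this ?_
    ext v : 1
    simp [mul_smul]
  · rw [lap_add, lap_smul, lap_smul, lap_rank_one]

lemma translate (h : EE n) (hj : Jet g (x + h) q l) : Jet (fun y => g (y + h)) x q l := by
  obtain ⟨Gf, A, h1, h2, rfl, rfl⟩ := hj
  refine ⟨fun y => Gf (y + h), A, ?_, ?_, rfl, rfl⟩
  · have ht : Tendsto (fun y : EE n => y + h) (nhds x) (nhds (x + h)) :=
      (continuous_id.add continuous_const).tendsto x
    filter_upwards [ht.eventually h1] with y hy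
    exact HasFDerivAt.comp y hy ((hasFDerivAt_id y).add_const h)
  · exact HasFDerivAt.comp x h2 ((hasFDerivAt_id x).add_const h)

lemma reflect (σ : EE n ≃ₗᵢ[ℝ] EE n) (hσ : ∀ x, σ (σ x) = x) (y₀ : EE n)
    (hj : Jet g (y₀ + σ (x - y₀)) q l) : Jet (fun y => g (y₀ + σ (y - y₀))) x (σ q) l := by
  obtain ⟨Gf, A, h1, h2, rfl, rfl⟩ := hj
  set S : EE n →L[ℝ] EE n := (σ.toContinuousLinearEquiv : EE n →L[ℝ] EE n) with hS
  have hSa : ∀ v, S v = σ v := fun v => rfl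
  have hd : ∀ y, HasFDerivAt (fun y => y₀ + σ (y - y₀)) S y := by
    intro y
    have := (S.hasFDerivAt (x := y - y₀)).comp y ((hasFDerivAt_id y).sub_const y₀)
    exact HasFDerivAt.const_add y₀ this
  have hadj : ∀ a b : EE n, ⟪σ a, b⟫ = ⟪a, σ b⟫ := by
    intro a b
    rw [← σ.inner_map_map a (σ b), hσ]
  refine ⟨fun y => S (Gf (y₀ + σ (y - y₀))), S.comp (A.comp S), ?_, ?_, rfl, lap_conj σ hσ A⟩
  · have ht : Tendsto (fun y : EE n => y₀ + σ (y - y₀)) (nhds x) (nhds (y₀ + σ (x - y₀))) :=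
      (hd x).continuousAt
    filter_upwards [ht.eventually h1] with y hy
    have := hy.comp y (hd y)
    refine HasFDerivAt.congr_fderiv this ?_
    ext v
    simp [hSa, hadj]
  · exact S.hasFDerivAt.comp x (h2.comp x (hd x))

lemma localMax (h : Jet g x q l) (hm : IsLocalMax g x) : q = 0 ∧ l ≤ 0 := by
  obtain ⟨Gf, A, h1, h2, rfl, rfl⟩ := h
  have hq : Gf x = 0 := by
    have := hm.hasFDerivAt_eq_zero h1.self_of_nhds
    have h3 : (innerSL ℝ (Gf x)) (Gf x) = 0 := by rw [this]; rfl
    simpa using h3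
  refine ⟨hq, ?_⟩
  apply Finset.sum_nonpos
  intro i _
  set v : EE n := EuclideanSpace.single i (1 : ℝ)
  by_contra hpos
  push Not at hpos
  set φ : ℝ → ℝ := fun s => g (x + s • v) with hφ
  have hline : ∀ s : ℝ, HasDerivAt (fun s : ℝ => x + s • v) v s := by
    intro s
    simpa using ((hasDerivAt_id s).smul_const v).const_add x
  have ht : Tendsto (fun s : ℝ => x + s • v) (nhds 0) (nhds x) := by
    have := (hline 0).continuousAt.tendsto
    simpa using this
  have hφ1 : ∀ᶠ s in nhds (0 : ℝ), HasDerivAt φ ⟪Gf (x + s • v), v⟫ s := by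
    filter_upwards [ht.eventually h1] with s hs
    exact hs.comp_hasDerivAt s (hline s)
  have hd : deriv φ =ᶠ[nhds 0] fun s => ⟪Gf (x + s • v), v⟫ := by
    filter_upwards [hφ1] with s hs using hs.deriv
  have h2' : HasDerivAt (fun s : ℝ => Gf (x + s • v)) (A v) 0 := by
    have h2a : HasFDerivAt Gf A (x + (0 : ℝ) • v) := by simpa using h2
    exact h2a.comp_hasDerivAt (0 : ℝ) (hline 0)
  have hdd : deriv (deriv φ) 0 = ⟪A v, v⟫ := by
    rw [hd.deriv_eq]
    have := h2'.inner ℝ (hasDerivAt_const (0 : ℝ) v)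
    simpa using this.deriv
  have hmin : IsLocalMin φ 0 := by
    apply isLocalMin_of_deriv_deriv_pos
    · rw [hdd]; exact hpos
    · rw [hd.self_of_nhds]; simp [hq]
    · exact hφ1.self_of_nhds.continuousAt
  have hmax : ∀ᶠ s in nhds (0 : ℝ), φ s ≤ φ 0 := by
    have : ∀ᶠ y in nhds x, g y ≤ g x := hm
    filter_upwards [ht.eventually this] with s hs
    simpa [hφ] using hs
  have hconst : φ =ᶠ[nhds 0] fun _ => φ 0 := by
    filter_upwards [hmax, hmin] with s hs1 hs2 using le_antisymm hs1 hs2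
  have : deriv (deriv φ) 0 = 0 := by
    have h4 : deriv φ =ᶠ[nhds 0] deriv (fun _ => φ 0) := hconst.deriv
    rw [h4.deriv_eq]; simp
  rw [hdd] at this
  exact absurd this hpos.ne'

end Jet

/-- Maximum principle skeleton. -/
lemma max_principle {n : ℕ} {g : EE n → ℝ} {S : Set (EE n)} (hS : IsCompact S)
    (hg : ContinuousOn g S)
    (h : ∀ x ∈ S, 0 < g x → S ∈ nhds x ∧ ∃ q l, Jet g x q l ∧ (q = 0 → 0 < l)) :
    ∀ x ∈ S, g x ≤ 0 := by
  intro x hx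
  obtain ⟨y, hy, hmax⟩ := hS.exists_isMaxOn ⟨x, hx⟩ hg
  by_contra hpos
  push Not at hpos
  have hgy : 0 < g y := hpos.trans_le (hmax hx)
  obtain ⟨hn, q, l, hj, hql⟩ := h y hy hgy
  obtain ⟨h1, h2⟩ := hj.localMax (hmax.isLocalMax hn)
  exact absurd (hql h1) (not_lt.2 h2)

/-- A local `C²` defining function `ζ` of the domain near the boundary point `a`. -/
structure BFrame {n : ℕ} (a : EE n) (ρ L : ℝ) (ζ : EE n → ℝ) (Z : EE n → EE n)
    (l : EE n → ℝ) (e : EE n) : Prop where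
  ρ_pos : 0 < ρ
  L_one : 1 ≤ L
  e_norm : ‖e‖ = 1
  zero : ζ a = 0
  jet : ∀ x ∈ ball a ρ, Jet ζ x (Z x) (l x)
  l_up : ∀ x ∈ ball a ρ, l x ≤ -1
  l_lo : ∀ x ∈ ball a ρ, -L ≤ l x
  dir : ∀ x ∈ ball a ρ, 1 ≤ ⟪Z x, e⟫
  Z_le : ∀ x ∈ ball a ρ, ‖Z x‖ ≤ L
  Z_lip : ∀ x ∈ ball a ρ, ∀ y ∈ ball a ρ, ‖Z x - Z y‖ ≤ L * ‖x - y‖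
  le_one : ∀ x ∈ ball a ρ, ζ x ≤ 1

/-- A solution of the stationary problem with bounded right-hand side, near `a`. -/
structure Sol₀ {n : ℕ} (a : EE n) (ρ : ℝ) (ζ : EE n → ℝ) (p β C M : ℝ)
    (w : EE n → ℝ) (G : EE n → EE n) (f : EE n → ℝ) : Prop where
  cont : ContinuousOn w {x | x ∈ ball a ρ ∧ 0 ≤ ζ x}
  zero : ∀ x ∈ ball a ρ, ζ x = 0 → w x = 0
  jet : ∀ x ∈ ball a ρ, 0 < ζ x → Jet w x (G x) (f x - ‖G x‖ ^ p)
  f_le : ∀ x ∈ ball a ρ, 0 < ζ x → |f x| ≤ M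
  grad : ∀ x ∈ ball a ρ, 0 < ζ x → ‖G x‖ ≤ C * ζ x ^ (-β)

/-- The same with a growth bound. -/
structure Sol {n : ℕ} (a : EE n) (ρ : ℝ) (ζ : EE n → ℝ) (p β C M : ℝ)
    (w : EE n → ℝ) (G : EE n → EE n) (f : EE n → ℝ) : Prop extends Sol₀ a ρ ζ p β C M w G f where
  growth : ∀ x ∈ ball a ρ, 0 ≤ ζ x → |w x| ≤ C * ζ x ^ (1 - β)

section FrameLemmas
variable {n : ℕ} {a : EE n} {ρ L : ℝ} {ζ : EE n → ℝ} {Z : EE n → EE n}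
    {l : EE n → ℝ} {e : EE n} {p β C M : ℝ} {w : EE n → ℝ} {G : EE n → EE n} {f : EE n → ℝ}

lemma BFrame.mono (F : BFrame a ρ L ζ Z l e) {ρ' : ℝ} (h0 : 0 < ρ') (h : ρ' ≤ ρ) :
    BFrame a ρ' L ζ Z l e :=
  ⟨h0, F.L_one, F.e_norm, F.zero, fun x hx => F.jet x (ball_subset_ball h hx),
    fun x hx => F.l_up x (ball_subset_ball h hx), fun x hx => F.l_lo x (ball_subset_ball h hx),
    fun x hx => F.dir x (ball_subset_ball h hx), fun x hx => F.Z_le x (ball_subset_ball h hx),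
    fun x hx y hy => F.Z_lip x (ball_subset_ball h hx) y (ball_subset_ball h hy),
    fun x hx => F.le_one x (ball_subset_ball h hx)⟩

lemma Sol₀.mono (F : Sol₀ a ρ ζ p β C M w G f) {ρ' : ℝ} (h : ρ' ≤ ρ) :
    Sol₀ a ρ' ζ p β C M w G f :=
  ⟨F.cont.mono fun x hx => ⟨ball_subset_ball h hx.1, hx.2⟩,
    fun x hx => F.zero x (ball_subset_ball h hx), fun x hx => F.jet x (ball_subset_ball h hx),
    fun x hx => F.f_le x (ball_subset_ball h hx), fun x hx => F.grad x (ball_subset_ball h hx)⟩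

lemma BFrame.cont (F : BFrame a ρ L ζ Z l e) : ContinuousOn ζ (ball a ρ) :=
  fun x hx => (F.jet x hx).continuousAt.continuousWithinAt

lemma BFrame.lip (F : BFrame a ρ L ζ Z l e) {x y : EE n} (hx : x ∈ ball a ρ)
    (hy : y ∈ ball a ρ) : |ζ x - ζ y| ≤ L * ‖x - y‖ := by
  have := Convex.norm_image_sub_le_of_norm_hasFDerivWithin_le (𝕜 := ℝ) (f := ζ) (C := L)
    (s := ball a ρ) (f' := fun x => innerSL ℝ (Z x)) (x := y) (y := x)
    (fun z hz => (F.jet z hz).hasFDerivAt.hasFDerivWithinAt)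
    (fun z hz => by rw [innerSL_apply_norm]; exact F.Z_le z hz) (convex_ball a ρ) hy hx
  simpa using this

lemma BFrame.diff_lip (F : BFrame a ρ L ζ Z l e) {x y h : EE n} (hx : x ∈ ball a ρ)
    (hy : y ∈ ball a ρ) (hxh : x + h ∈ ball a ρ) (hyh : y + h ∈ ball a ρ) :
    |(ζ (x + h) - ζ x) - (ζ (y + h) - ζ y)| ≤ L * ‖h‖ * ‖x - y‖ := by
  have hconv : Convex ℝ (ball a ρ ∩ (fun z => z + h) ⁻¹' ball a ρ) := by
    refine (convex_ball a ρ).inter ?_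
    have : (fun z => z + h) ⁻¹' ball a ρ = ball (a - h) ρ := by
      ext z; simp [dist_eq_norm, sub_sub_eq_add_sub]
    rw [this]; exact convex_ball _ _
  have := Convex.norm_image_sub_le_of_norm_hasFDerivWithin_le (𝕜 := ℝ)
    (f := fun z => ζ (z + h) - ζ z) (C := L * ‖h‖)
    (s := ball a ρ ∩ (fun z => z + h) ⁻¹' ball a ρ)
    (f' := fun x => innerSL ℝ (Z (x + h) - Z x)) (x := y) (y := x)
    (fun z hz => (((F.jet (z + h) hz.2).translate h).sub (F.jet z hz.1)).hasFDerivAt.hasFDerivWithinAt)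
    (fun z hz => by
      rw [innerSL_apply_norm]
      have := F.Z_lip (z + h) hz.2 z hz.1
      simpa using this) hconv ⟨hy, hyh⟩ ⟨hx, hxh⟩
  simpa using this

lemma BFrame.foot (F : BFrame a ρ L ζ Z l e) {x : EE n} (hx : ‖x - a‖ < ρ / (4 * L))
    (hpos : 0 < ζ x) : ∃ (b : EE n) (τ : ℝ), 0 < τ ∧ τ ≤ ζ x ∧ x = b + τ • e ∧ ζ b = 0 ∧
      ‖x - b‖ ≤ ζ x ∧ ‖b - a‖ < ρ / 2 ∧
      ∀ σ ∈ Icc 0 τ, b + σ • e ∈ ball a ρ ∧ σ ≤ ζ (b + σ • e) := by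
  have hL := F.L_one
  have hρ := F.ρ_pos
  have hx4 : ‖x - a‖ < ρ / 4 := by
    refine hx.trans_le ?_
    apply div_le_div_of_nonneg_left hρ.le (by norm_num) (by linarith)
  have hxb : x ∈ ball a ρ := by rw [mem_ball, dist_eq_norm]; linarith
  have hζx : ζ x ≤ ρ / 4 := by
    have h1 := F.lip hxb (mem_ball_self hρ)
    rw [F.zero, sub_zero] at h1
    have h2 : L * ‖x - a‖ ≤ L * (ρ / (4 * L)) := by gcongr
    have h3 : L * (ρ / (4 * L)) = ρ / 4 := by field_simp
    linarith [le_abs_self (ζ x)]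
  have hin : ∀ σ ∈ Icc 0 (ζ x), ‖x - σ • e - a‖ < ρ / 2 := by
    intro σ hσ
    have : x - σ • e - a = (x - a) - σ • e := by abel
    rw [this]
    have h1 := norm_sub_le (x - a) (σ • e)
    rw [norm_smul, F.e_norm, Real.norm_of_nonneg hσ.1] at h1
    linarith [hσ.2]
  have hin' : ∀ σ ∈ Icc 0 (ζ x), x - σ • e ∈ ball a ρ := by
    intro σ hσ
    rw [mem_ball, dist_eq_norm]; linarith [hin σ hσ]
  set k : ℝ → ℝ := fun σ => ζ (x - σ • e) with hk
  have hline : ∀ s : ℝ, HasDerivAt (fun s : ℝ => x - s • e) (-e) s := by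
    intro s
    simpa using ((hasDerivAt_id s).smul_const e).const_sub x
  have hkd : ∀ σ ∈ Icc 0 (ζ x), HasDerivAt k (-⟪Z (x - σ • e), e⟫) σ := by
    intro σ hσ
    have h1 := (F.jet _ (hin' σ hσ)).hasFDerivAt.comp_hasDerivAt σ (hline σ)
    have h2 : (innerSL ℝ (Z (x - σ • e))) (-e) = -⟪Z (x - σ • e), e⟫ := by simp
    rw [← h2]; exact h1
  have hanti : AntitoneOn (fun σ => k σ + σ) (Icc 0 (ζ x)) := by
    apply antitoneOn_of_deriv_nonpos (convex_Icc _ _)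
    · intro σ hσ
      exact ((hkd σ hσ).continuousAt.add continuousAt_id).continuousWithinAt
    · intro σ hσ
      rw [interior_Icc] at hσ
      exact ((hkd σ (Ioo_subset_Icc_self hσ)).add
        (hasDerivAt_id σ)).differentiableAt.differentiableWithinAt
    · intro σ hσ
      rw [interior_Icc] at hσ
      have h1 := (hkd σ (Ioo_subset_Icc_self hσ)).add (hasDerivAt_id σ)
      have h2 : deriv (fun σ => k σ + σ) σ = -⟪Z (x - σ • e), e⟫ + 1 := h1.deriv
      rw [h2]
      linarith [F.dir _ (hin' σ (Ioo_subset_Icc_self hσ))]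
  have hk0 : k 0 = ζ x := by simp [hk]
  have h0m : (0 : ℝ) ∈ Icc 0 (ζ x) := ⟨le_rfl, hpos.le⟩
  have h1m : ζ x ∈ Icc 0 (ζ x) := ⟨hpos.le, le_rfl⟩
  have hkend : k (ζ x) ≤ 0 := by
    have := hanti h0m h1m hpos.le
    simp only [hk0] at this
    linarith
  have hkc : ContinuousOn k (Icc 0 (ζ x)) := fun σ hσ => (hkd σ hσ).continuousAt.continuousWithinAt
  obtain ⟨τ, hτ, hkτ⟩ : (0 : ℝ) ∈ k '' Icc 0 (ζ x) :=
    intermediate_value_Icc' hpos.le hkc ⟨hkend, by rw [hk0]; exact hpos.le⟩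
  have hτ0 : 0 < τ := by
    rcases hτ.1.eq_or_lt with h | h
    · rw [← h, hk0] at hkτ; linarith
    · exact h
  refine ⟨x - τ • e, τ, hτ0, hτ.2, by simp, hkτ, ?_, hin τ hτ, ?_⟩
  · have : x - (x - τ • e) = τ • e := by abel
    rw [this, norm_smul, F.e_norm, Real.norm_of_nonneg hτ.1]; linarith [hτ.2]
  · intro σ hσ
    have h1 : x - τ • e + σ • e = x - (τ - σ) • e := by rw [sub_smul]; abel
    have h2 : τ - σ ∈ Icc 0 (ζ x) := ⟨by linarith [hσ.2], by linarith [hσ.1, hτ.2]⟩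
    rw [h1]
    refine ⟨hin' _ h2, ?_⟩
    have := hanti h2 hτ (by linarith [hσ.1])
    simp only [hkτ] at this
    have h3 : k (τ - σ) = ζ (x - (τ - σ) • e) := rfl
    rw [← h3]; linarith

lemma Sol₀.growth_aux (S : Sol₀ a ρ ζ p β C M w G f) (F : BFrame a ρ L ζ Z l e)
    (hβ0 : 0 < β) (hβ1 : β < 1) (hC : 0 ≤ C) (c : ℝ) (hc : |c| = 1) {x : EE n}
    (hx : ‖x - a‖ < ρ / (4 * L)) (hpos : 0 < ζ x) : c * w x ≤ C / (1 - β) * ζ x ^ (1 - β) := by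
  obtain ⟨b, τ, hτ0, hτ, hxb, hb0, -, hba, hseg⟩ := F.foot hx hpos
  have hρ := F.ρ_pos
  have hβ' : 0 < 1 - β := by linarith
  have hbb : b ∈ ball a ρ := by rw [mem_ball, dist_eq_norm]; linarith
  set k : ℝ → ℝ := fun σ => w (b + σ • e) with hk
  have hline : ∀ s : ℝ, HasDerivAt (fun s : ℝ => b + s • e) e s := by
    intro s
    simpa using ((hasDerivAt_id s).smul_const e).const_add b
  have hkd : ∀ σ ∈ Ioo 0 τ, HasDerivAt k ⟪G (b + σ • e), e⟫ σ := by
    intro σ hσ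
    obtain ⟨h1, h2⟩ := hseg σ (Ioo_subset_Icc_self hσ)
    exact (S.jet _ h1 (hσ.1.trans_le h2)).hasFDerivAt.comp_hasDerivAt σ (hline σ)
  have hpd : ∀ σ ∈ Ioo 0 τ, HasDerivAt (fun σ : ℝ => C / (1 - β) * σ ^ (1 - β))
      (C * σ ^ (-β)) σ := by
    intro σ hσ
    have := (Real.hasDerivAt_rpow_const (x := σ) (p := 1 - β) (Or.inl hσ.1.ne')).const_mul
      (C / (1 - β))
    refine this.congr_deriv ?_
    rw [show 1 - β - 1 = -β by ring]
    field_simp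
  have hmono : MonotoneOn (fun σ => C / (1 - β) * σ ^ (1 - β) - c * k σ) (Icc 0 τ) := by
    apply monotoneOn_of_deriv_nonneg (convex_Icc _ _)
    · apply ContinuousOn.sub
      · exact (continuous_const.mul (Real.continuous_rpow_const hβ'.le)).continuousOn
      · apply continuousOn_const.mul
        refine S.cont.comp (f := fun σ : ℝ => b + σ • e) ?_ ?_
        · exact fun σ _ => (hline σ).continuousAt.continuousWithinAt
        · intro σ hσ
          exact ⟨(hseg σ hσ).1, hσ.1.trans (hseg σ hσ).2⟩
    · intro σ hσ
      rw [interior_Icc] at hσ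
      exact ((hpd σ hσ).sub ((hkd σ hσ).const_mul c)).differentiableAt.differentiableWithinAt
    · intro σ hσ
      rw [interior_Icc] at hσ
      have h1 := (hpd σ hσ).sub ((hkd σ hσ).const_mul c)
      have h2 : deriv (fun σ => C / (1 - β) * σ ^ (1 - β) - c * k σ) σ =
        C * σ ^ (-β) - c * ⟪G (b + σ • e), e⟫ := h1.deriv
      rw [h2]
      obtain ⟨h3, h4⟩ := hseg σ (Ioo_subset_Icc_self hσ)
      have h5 := S.grad _ h3 (hσ.1.trans_le h4)
      have h6 : ζ (b + σ • e) ^ (-β) ≤ σ ^ (-β) :=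
        Real.rpow_le_rpow_of_nonpos hσ.1 h4 (by linarith)
      have h7 : |c * ⟪G (b + σ • e), e⟫| ≤ ‖G (b + σ • e)‖ := by
        rw [abs_mul, hc, one_mul]
        have := abs_real_inner_le_norm (G (b + σ • e)) e
        rwa [F.e_norm, mul_one] at this
      have h8 : C * ζ (b + σ • e) ^ (-β) ≤ C * σ ^ (-β) := by gcongr
      linarith [le_abs_self (c * ⟪G (b + σ • e), e⟫)]
  have h1 := hmono ⟨le_rfl, hτ0.le⟩ ⟨hτ0.le, le_rfl⟩ hτ0.le
  have h2 : k 0 = 0 := by simp [hk, S.zero b hbb hb0]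
  have h3 : k τ = w x := by rw [hk, hxb]
  simp only [h2, h3, Real.zero_rpow hβ'.ne'] at h1
  have h4 : C / (1 - β) * τ ^ (1 - β) ≤ C / (1 - β) * ζ x ^ (1 - β) := by
    gcongr
  linarith

lemma Sol₀.toSol (S : Sol₀ a ρ ζ p β C M w G f) (F : BFrame a ρ L ζ Z l e)
    (hβ0 : 0 < β) (hβ1 : β < 1) (hC : 0 ≤ C) :
    Sol a (ρ / (4 * L)) ζ p β (C / (1 - β)) M w G f := by
  have hβ' : 0 < 1 - β := by linarith
  have hL := F.L_one
  have hρ := F.ρ_pos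
  have hle : ρ / (4 * L) ≤ ρ := div_le_self hρ.le (by linarith)
  have hC' : C ≤ C / (1 - β) := by
    rw [le_div_iff₀ hβ']; nlinarith
  have S' := S.mono hle
  refine ⟨⟨S'.cont, S'.zero, S'.jet, S'.f_le, ?_⟩, ?_⟩
  · intro x hx hpos
    refine (S'.grad x hx hpos).trans ?_
    gcongr
  · intro x hx h0
    rcases h0.eq_or_lt with h | h
    · rw [S'.zero x hx h.symm, ← h, Real.zero_rpow hβ'.ne']; simp
    · rw [mem_ball, dist_eq_norm] at hx
      have h1 := S.growth_aux F hβ0 hβ1 hC 1 (by simp) hx h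
      have h2 := S.growth_aux F hβ0 hβ1 hC (-1) (by simp) hx h
      rw [abs_le]; constructor <;> linarith

lemma Sol.mono (F : Sol a ρ ζ p β C M w G f) {ρ' : ℝ} (h : ρ' ≤ ρ) :
    Sol a ρ' ζ p β C M w G f :=
  ⟨F.toSol₀.mono h, fun x hx => F.growth x (ball_subset_ball h hx)⟩

lemma BFrame.compact (F : BFrame a ρ L ζ Z l e) {b : EE n} {R : ℝ} (hb : closedBall b R ⊆ ball a ρ) :
    IsCompact {x | x ∈ closedBall b R ∧ 0 ≤ ζ x} := by
  have h1 : IsClosed (closedBall b R ∩ ζ ⁻¹' Ici 0) :=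
    (F.cont.mono hb).preimage_isClosed_of_isClosed isClosed_closedBall isClosed_Ici
  exact (isCompact_closedBall b R).of_isClosed_subset h1 inter_subset_left

end FrameLemmas


section LemmaB
variable {n : ℕ} {a : EE n} {ρ L : ℝ} {ζ : EE n → ℝ} {Z : EE n → EE n}
    {l : EE n → ℝ} {e : EE n} {p β C M : ℝ} {w : EE n → ℝ} {G : EE n → EE n} {f : EE n → ℝ}

lemma BFrame.ev_pos (F : BFrame a ρ L ζ Z l e) {x : EE n} (hx : x ∈ ball a ρ) {c : ℝ}
    (h : c < ζ x) : ∀ᶠ y in nhds x, c < ζ y :=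
  (F.jet x hx).continuousAt.eventually (lt_mem_nhds h)

lemma BFrame.ev_lt (F : BFrame a ρ L ζ Z l e) {x : EE n} (hx : x ∈ ball a ρ) {c : ℝ}
    (h : ζ x < c) : ∀ᶠ y in nhds x, ζ y < c :=
  (F.jet x hx).continuousAt.eventually (gt_mem_nhds h)

lemma ev_ball {x b : EE n} {R : ℝ} (h : ‖x - b‖ < R) : ∀ᶠ y in nhds x, y ∈ ball b R :=
  isOpen_ball.mem_nhds (by rwa [mem_ball, dist_eq_norm])

lemma BFrame.le_L (F : BFrame a ρ L ζ Z l e) {x b : EE n} (hx : x ∈ ball a ρ) (hb : b ∈ ball a ρ)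
    (h0 : ζ b = 0) : ζ x ≤ L * ‖x - b‖ := by
  have := F.lip hx hb
  rw [h0, sub_zero] at this
  exact (le_abs_self _).trans this

/-- Lower barrier. -/
lemma lower_barrier (F : BFrame a ρ L ζ Z l e) (hβ0 : 0 < β) (hβ1 : β < 1) (hC : 0 ≤ C)
    (hM : 0 ≤ M) :
    ∃ CB ≥ 0, ∀ (w : EE n → ℝ) (G : EE n → EE n) (f : EE n → ℝ), Sol a ρ ζ p β C M w G f →
      ∀ x ∈ ball a (ρ / (4 * L)), 0 < ζ x → -CB * ζ x ≤ w x := by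
  have hρ := F.ρ_pos
  have hL := F.L_one
  set R := ρ / 4 with hR
  have hR0 : 0 < R := by positivity
  set B := C / R ^ 2 with hB
  have hB0 : 0 ≤ B := by positivity
  set N := M + 2 * n * B + 1 with hN
  have hN0 : 0 ≤ N := by positivity
  refine ⟨N + B, by positivity, ?_⟩
  intro w G f S x hx hpos
  rw [mem_ball, dist_eq_norm] at hx
  obtain ⟨b, τ, hτ0, hτ, hxb, hb0, hxb', hba, hseg⟩ := F.foot hx hpos
  have hbb : b ∈ ball a ρ := by rw [mem_ball, dist_eq_norm]; linarith
  have hsub : closedBall b R ⊆ ball a ρ := by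
    intro y hy
    rw [mem_closedBall, dist_eq_norm] at hy
    rw [mem_ball, dist_eq_norm]
    have := norm_sub_le_norm_sub_add_norm_sub y b a
    linarith
  have hζx : ζ x ≤ ρ / 4 := by
    have h1 := F.le_L (x := x) (b := a) (by
      rw [mem_ball, dist_eq_norm]; refine hx.trans_le (div_le_self hρ.le (by linarith)))
      (mem_ball_self hρ) F.zero
    have h2 : L * ‖x - a‖ ≤ L * (ρ / (4 * L)) := by gcongr
    have h3 : L * (ρ / (4 * L)) = ρ / 4 := by field_simp
    linarith
  have key := max_principle (g := fun y => -1 * w y - (N * ζ y + B * ‖y - b‖ ^ 2))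
    (F.compact hsub) (by
      have h1 : ContinuousOn w {x | x ∈ closedBall b R ∧ 0 ≤ ζ x} :=
        S.cont.mono fun y hy => ⟨hsub hy.1, hy.2⟩
      have h2 : ContinuousOn ζ {x | x ∈ closedBall b R ∧ 0 ≤ ζ x} :=
        F.cont.mono fun y hy => hsub hy.1
      have h3 : ContinuousOn (fun y : EE n => ‖y - b‖ ^ 2) {x | x ∈ closedBall b R ∧ 0 ≤ ζ x} :=
        (by fun_prop : Continuous (fun y : EE n => ‖y - b‖ ^ 2)).continuousOn
      exact (continuousOn_const.mul h1).sub
        ((continuousOn_const.mul h2).add (continuousOn_const.mul h3)))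
    (by
      rintro y ⟨hyR, hy0⟩ hg
      have hya := hsub hyR
      rw [mem_closedBall, dist_eq_norm] at hyR
      have hw := S.growth y hya hy0
      have hw1 : |w y| ≤ C := by
        refine hw.trans ?_
        have := Real.rpow_le_one hy0 (F.le_one y hya) (by linarith : 0 ≤ 1 - β)
        nlinarith
      have hy1 : 0 < ζ y := by
        rcases hy0.eq_or_lt with h | h
        · exfalso
          rw [S.zero y hya h.symm, ← h] at hg
          have : 0 ≤ B * ‖y - b‖ ^ 2 := by positivity
          linarith
        · exact h
      have hy2 : ‖y - b‖ < R := by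
        rcases hyR.eq_or_lt with h | h
        · exfalso
          rw [h] at hg
          have : B * R ^ 2 = C := by rw [hB]; field_simp
          have : 0 ≤ N * ζ y := by positivity
          have := neg_abs_le (w y)
          linarith
        · exact h
      refine ⟨?_, _, _, ((S.jet y hya hy1).const_mul (-1)).sub
        (((F.jet y hya).const_mul N).add ((Jet.sqdist b).const_mul B)), ?_⟩
      · filter_upwards [F.ev_pos hya hy1, ev_ball hy2] with z h1 h2
        exact ⟨ball_subset_closedBall h2, h1.le⟩
      · intro _
        have h1 := (abs_le.1 (S.f_le y hya hy1)).2
        have h2 := F.l_up y hya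
        have h3 : 0 ≤ ‖G y‖ ^ p := by positivity
        have h4 : N * l y ≤ N * (-1) := by gcongr
        rw [hN] at h4 ⊢
        linarith)
  have := key x ⟨by rw [mem_closedBall, dist_eq_norm]; linarith, hpos.le⟩
  have h5 : B * ‖x - b‖ ^ 2 ≤ B * ζ x := by
    have h6 := F.le_one x (hsub (by rw [mem_closedBall, dist_eq_norm]; linarith))
    have : ‖x - b‖ ^ 2 ≤ ζ x := by nlinarith [norm_nonneg (x - b)]
    gcongr
  linarith

end LemmaB


lemma norm_convex_rpow {n : ℕ} {p α : ℝ} (hp : 1 ≤ p) (h0 : 0 ≤ α) (h1 : α ≤ 1) (A D : EE n) :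
    ‖(1 - α) • A + α • D‖ ^ p ≤ (1 - α) * ‖A‖ ^ p + α * ‖D‖ ^ p := by
  have h2 : ‖(1 - α) • A + α • D‖ ≤ (1 - α) * ‖A‖ + α * ‖D‖ := by
    refine (norm_add_le _ _).trans ?_
    rw [norm_smul, norm_smul, Real.norm_of_nonneg h0, Real.norm_of_nonneg (by linarith)]
  have h3 := (convexOn_rpow hp).2 (mem_Ici.2 (norm_nonneg A)) (mem_Ici.2 (norm_nonneg D))
    (by linarith : 0 ≤ 1 - α) h0 (by ring)
  simp only [smul_eq_mul] at h3
  refine le_trans ?_ h3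
  exact Real.rpow_le_rpow (norm_nonneg _) h2 (by linarith)

section LemmaC
variable {n : ℕ} {a : EE n} {ρ L : ℝ} {ζ : EE n → ℝ} {Z : EE n → EE n}
    {l : EE n → ℝ} {e : EE n} {p β C M : ℝ} {w : EE n → ℝ} {G : EE n → EE n} {f : EE n → ℝ}

lemma Sol.mvt (S : Sol a ρ ζ p β C M w G f) (hC : 0 ≤ C) (hβ0 : 0 < β) {x y : EE n} {c : ℝ}
    (hc : 0 < c) (h : ∀ z ∈ segment ℝ x y, z ∈ ball a ρ ∧ c ≤ ζ z) :
    w y - w x ≤ C * c ^ (-β) * ‖y - x‖ := by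
  have := Convex.norm_image_sub_le_of_norm_hasFDerivWithin_le (𝕜 := ℝ) (f := w)
    (C := C * c ^ (-β))
    (s := segment ℝ x y) (f' := fun x => innerSL ℝ (G x)) (x := x) (y := y)
    (fun z hz => (S.jet z (h z hz).1 (hc.trans_le (h z hz).2)).hasFDerivAt.hasFDerivWithinAt)
    (fun z hz => by
      rw [innerSL_apply_norm]
      refine (S.grad z (h z hz).1 (hc.trans_le (h z hz).2)).trans ?_
      have := Real.rpow_le_rpow_of_nonpos hc (h z hz).2 (by linarith : -β ≤ 0)
      gcongr) (convex_segment x y) (left_mem_segment ℝ x y) (right_mem_segment ℝ x y)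
  exact (le_abs_self _).trans this

lemma BFrame.Z_ge (F : BFrame a ρ L ζ Z l e) {x : EE n} (hx : x ∈ ball a ρ) : 1 ≤ ‖Z x‖ := by
  have h1 := F.dir x hx
  have h2 := real_inner_le_norm (Z x) e
  rw [F.e_norm, mul_one] at h2
  linarith

set_option maxHeartbeats 1600000 in
lemma translation_core (F : BFrame a ρ L ζ Z l e) (hβ0 : 0 < β) (hβ1 : β < 1) (hp : 1 ≤ p)
    (hβp : β * p = 1 + β)
    (hC : 0 ≤ C) (hM : 0 ≤ M) {r lam Lam α c0 ε : ℝ} (hr : 0 < r) (hlam : 0 < lam)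
    (hα : 0 < α) (hα1 : α ≤ 1) (hc0 : 0 < c0)
    (h1 : 8 * L ≤ lam) (h2 : C * (lam / 2) ^ (-β) * 4 ≤ ε / 2) (h3 : α * (C * lam ^ (1 - β)) ≤ ε / 2)
    (h4 : α * C ≤ ε) (h5 : 2 * (n + 1) * L * lam ≤ Lam)
    (h6 : 2 * C * (2 * lam) ^ (1 - β) ≤ α * (c0 * Lam ^ (1 - β)))
    (h7 : α * (c0 * Lam ^ (1 - β) * (4 + 2 * (n + 1) * lam) / Lam ^ 2) ≤ ε)
    (h8 : (3 * c0) ^ p ≤ c0)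
    (h9 : C * (4 * L * (Lam + 2) * r) ^ (1 - β) ≤ ε) (h10 : (Lam + 4) * r < ρ)
    (h11 : 2 * M < α * (c0 * (Lam * r) ^ (-1 - β)))
    (S : Sol a ρ ζ p β C M w G f) {y₁ y₂ : EE n} (hy₁ : ‖y₁ - a‖ ≤ 2 * r) (hy₂ : ‖y₂ - a‖ ≤ 2 * r)
    (hpos : 0 < ζ y₁) (hle : ζ y₁ ≤ r) (heq : ζ y₂ = ζ y₁) :
    w y₂ ≤ w y₁ + 3 * ε * r ^ (1 - β) := by
  have hL := F.L_one
  have hn0 : (0 : ℝ) ≤ n := Nat.cast_nonneg n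
  have hq : 0 < 1 - β := by linarith
  have hlam8 : 8 ≤ lam := by linarith
  have hLam : lam ≤ Lam := by nlinarith [mul_nonneg hn0 (by positivity : 0 ≤ L * lam)]
  have hLam0 : 0 < Lam := by linarith
  set h := y₂ - y₁ with hh
  have hh4 : ‖h‖ ≤ 4 * r := by
    have := norm_sub_le (y₂ - a) (y₁ - a)
    rw [sub_sub_sub_cancel_right] at this
    linarith
  set R := Lam * r with hR
  have hR0 : 0 < R := by positivity
  set s := lam * r with hs
  have hs0 : 0 < s := by positivity
  set D := r ^ (1 - β) with hD
  have hD0 : 0 < D := by positivity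
  set B := c0 * R ^ (1 - β) with hB
  have hB0 : 0 < B := by positivity
  have hBD : B = c0 * Lam ^ (1 - β) * D := by
    rw [hB, hR, Real.mul_rpow hLam0.le hr.le]; ring
  have hBR2 : B / R ^ 2 = c0 * R ^ (-1 - β) := by
    rw [hB, mul_div_assoc, show (-1 - β) = (1 - β) - (2 : ℕ) by push_cast; ring,
      Real.rpow_sub_natCast hR0.ne']
  have hBR : (3 * B / R) ^ p ≤ B / R ^ 2 := by
    have e1 : 3 * B / R = (3 * c0) * R ^ (-β) := by
      rw [hB, Real.rpow_sub hR0, Real.rpow_one, Real.rpow_neg hR0.le]; field_simp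
    rw [e1, Real.mul_rpow (by positivity) (by positivity), ← Real.rpow_mul hR0.le, hBR2,
      show -β * p = -1 - β by linarith]
    gcongr
  set N := (n + 1) * B / R ^ 2 with hN
  have hN0 : 0 ≤ N := by positivity
  set E := ε * D with hE
  have hRρ : R + 4 * r < ρ := by rw [hR]; linarith
  have hsubx : ∀ x ∈ closedBall a R, x ∈ ball a ρ := by
    intro x hx
    rw [mem_closedBall, dist_eq_norm] at hx
    rw [mem_ball, dist_eq_norm]
    linarith
  have hsubh : ∀ x ∈ closedBall a R, x + h ∈ ball a ρ := by
    intro x hx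
    rw [mem_closedBall, dist_eq_norm] at hx
    rw [mem_ball, dist_eq_norm]
    have := norm_add_le (x - a) h
    rw [show x - a + h = x + h - a by abel] at this
    linarith
  have hy₁R : y₁ ∈ closedBall a R := by
    rw [mem_closedBall, dist_eq_norm, hR]
    have : 2 * r ≤ Lam * r := by gcongr; linarith
    linarith
  have hy12 : y₁ + h = y₂ := by rw [hh]; abel
  have hcζ : ContinuousOn ζ (closedBall a R) := F.cont.mono hsubx
  have hcζh : ContinuousOn (fun x => ζ (x + h)) (closedBall a R) :=
    F.cont.comp (f := fun x => x + h) (by fun_prop) hsubh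
  set K := closedBall a R ∩ (fun x => (ζ x, ζ (x + h))) ⁻¹' (Icc 0 s ×ˢ Ici 0) with hK
  have hKc : IsCompact K :=
    (isCompact_closedBall a R).of_isClosed_subset
      ((hcζ.prodMk hcζh).preimage_isClosed_of_isClosed isClosed_closedBall
        (isClosed_Icc.prod isClosed_Ici)) inter_subset_left
  have key := max_principle (S := K)
    (g := fun y => (w (y + h) - (1 - α) * w y) - (α * (B / R ^ 2 * ‖y - a‖ ^ 2 +
      N * (2 * s * ζ y - ζ y ^ 2)) + E)) hKc (by
      have c1 : ContinuousOn w K :=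
        S.cont.mono fun y hy => ⟨hsubx y hy.1, hy.2.1.1⟩
      have c2 : ContinuousOn (fun y => w (y + h)) K :=
        S.cont.comp (f := fun x => x + h) (by fun_prop) fun y hy => ⟨hsubh y hy.1, hy.2.2⟩
      have c3 : ContinuousOn ζ K := hcζ.mono inter_subset_left
      have c4 : ContinuousOn (fun y : EE n => ‖y - a‖ ^ 2) K :=
        (by fun_prop : Continuous (fun y : EE n => ‖y - a‖ ^ 2)).continuousOn
      exact (c2.sub (continuousOn_const.mul c1)).sub (((continuousOn_const.mul
        ((continuousOn_const.mul c4).add (continuousOn_const.mul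
          ((continuousOn_const.mul c3).sub (c3.pow 2))))).add continuousOn_const)))
    (by
      rintro y ⟨hyR, ⟨hy0, hys⟩, hyh0⟩ hg
      simp only [mem_Ici] at hy0 hys hyh0
      have hya := hsubx y hyR
      have hyha := hsubh y hyR
      rw [mem_closedBall, dist_eq_norm] at hyR
      have hw := abs_le.1 (S.growth y hya hy0)
      have hwh := abs_le.1 (S.growth (y + h) hyha hyh0)
      have hφ2 : 0 ≤ N * (2 * s * ζ y - ζ y ^ 2) := by
        apply mul_nonneg hN0; nlinarith only [hy0, hys]
      have hφ1 : 0 ≤ B / R ^ 2 * ‖y - a‖ ^ 2 := by positivity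
      have hαφ : 0 ≤ α * (B / R ^ 2 * ‖y - a‖ ^ 2 + N * (2 * s * ζ y - ζ y ^ 2)) := by
        apply mul_nonneg hα.le; linarith
      have hθ : |ζ (y + h) - ζ y| ≤ 4 * L * (Lam + 2) * r * r := by
        have := F.diff_lip hya (hsubx _ hy₁R) hyha (hsubh _ hy₁R)
        rw [hy12, heq, sub_self, sub_zero] at this
        refine this.trans ?_
        have h12 : ‖y - y₁‖ ≤ (Lam + 2) * r := by
          have := norm_sub_le (y - a) (y₁ - a)
          rw [sub_sub_sub_cancel_right] at this
          linarith
        calc L * ‖h‖ * ‖y - y₁‖ ≤ L * (4 * r) * ((Lam + 2) * r) := by gcongr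
          _ = _ := by ring
      have hθC : C * (4 * L * (Lam + 2) * r * r) ^ (1 - β) ≤ E := by
        rw [Real.mul_rpow (by positivity) hr.le, ← mul_assoc, hE]; gcongr
      have hθ' := abs_le.1 hθ
      -- the four boundary pieces
      have hy1 : 0 < ζ y := by
        rcases hy0.eq_or_lt with h' | h'
        · exfalso
          rw [S.zero y hya h'.symm] at hg
          have : C * ζ (y + h) ^ (1 - β) ≤ C * (4 * L * (Lam + 2) * r * r) ^ (1 - β) := by
            gcongr; linarith
          linarith
        · exact h'
      have hyh1 : 0 < ζ (y + h) := by
        rcases hyh0.eq_or_lt with h' | h'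
        · exfalso
          rw [S.zero (y + h) hyha h'.symm] at hg
          have h13 : C * ζ y ^ (1 - β) ≤ C * (4 * L * (Lam + 2) * r * r) ^ (1 - β) := by
            gcongr; linarith
          have h14 : -((1 - α) * w y) ≤ C * ζ y ^ (1 - β) := by
            have h15 : 0 ≤ C * ζ y ^ (1 - β) := by positivity
            nlinarith only [h15, hw.1, hw.2, hα, hα1]
          linarith
        · exact h'
      have hζh : ∀ z ∈ segment ℝ y (y + h), z ∈ ball a ρ ∧ lam / 2 * r ≤ ζ z + (s - ζ y) ∧
          ζ z ≤ ζ y + 4 * L * r := by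
        intro z hz
        have hza : z ∈ ball a ρ := (convex_ball a ρ).segment_subset hya hyha hz
        refine ⟨hza, ?_⟩
        have h16 : ‖z - y‖ ≤ 4 * r := by
          obtain ⟨t, ht, rfl⟩ := (segment_eq_image' ℝ y (y + h)) ▸ hz
          simp only [add_sub_cancel_left]
          rw [norm_smul, Real.norm_of_nonneg ht.1]
          have := mul_le_mul_of_nonneg_right ht.2 (norm_nonneg h)
          linarith
        have h17 := abs_le.1 ((F.lip hza hya).trans (mul_le_mul_of_nonneg_left h16 (by linarith)))
        have h30 : 8 * L * r ≤ lam * r := by gcongr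
        constructor
        · rw [hs]; linarith [h17.1]
        · linarith [h17.2]
      have hyR' : ‖y - a‖ < R := by
        rcases hyR.eq_or_lt with h' | h'
        · exfalso
          rw [h', div_mul_cancel₀ _ (by positivity)] at hg
          have h18 : ζ (y + h) ≤ 2 * lam * r := by
            have := (hζh (y + h) (right_mem_segment ℝ _ _)).2.2
            have h30 : 8 * L * r ≤ lam * r := by gcongr
            have h31 : 0 ≤ L * r := by positivity
            linarith
          have h19 : ζ y ≤ 2 * lam * r := by linarith
          have e1 : (2 * lam * r) ^ (1 - β) = (2 * lam) ^ (1 - β) * D :=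
            Real.mul_rpow (by positivity) hr.le
          have h20 : C * ζ (y + h) ^ (1 - β) ≤ C * ((2 * lam) ^ (1 - β) * D) := by
            rw [← e1]; gcongr
          have h21 : C * ζ y ^ (1 - β) ≤ C * ((2 * lam) ^ (1 - β) * D) := by
            rw [← e1]; gcongr
          have h22 : -((1 - α) * w y) ≤ C * ζ y ^ (1 - β) := by
            have h15 : 0 ≤ C * ζ y ^ (1 - β) := by positivity
            nlinarith only [h15, hw.1, hw.2, hα, hα1]
          have h23 := mul_le_mul_of_nonneg_right h6 hD0.le
          have h24 : α * B = α * (c0 * Lam ^ (1 - β)) * D := by rw [hBD]; ring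
          have h25 : 0 ≤ α * (N * (2 * s * ζ y - ζ y ^ 2)) := mul_nonneg hα.le hφ2
          have h26 : 0 ≤ E := le_trans (by positivity) hθC
          linarith
        · exact h'
      have hys' : ζ y < s := by
        rcases hys.eq_or_lt with h' | h'
        · exfalso
          have h27 := S.mvt hC hβ0 (x := y) (y := y + h) (c := lam / 2 * r) (by positivity)
            (fun z hz => ⟨(hζh z hz).1, by linarith [(hζh z hz).2.1]⟩)
          rw [add_sub_cancel_left] at h27
          have h28 : C * (lam / 2 * r) ^ (-β) * ‖h‖ ≤ ε / 2 * D := by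
            calc C * (lam / 2 * r) ^ (-β) * ‖h‖ ≤ C * (lam / 2 * r) ^ (-β) * (4 * r) := by gcongr
              _ = C * (lam / 2) ^ (-β) * 4 * D := by
                rw [Real.mul_rpow (by positivity) hr.le, hD, Real.rpow_sub hr, Real.rpow_one,
                  Real.rpow_neg hr.le]
                field_simp
              _ ≤ _ := by gcongr
          have h29 : α * w y ≤ ε / 2 * D := by
            calc α * w y ≤ α * (C * ζ y ^ (1 - β)) := by gcongr; exact hw.2
              _ = α * (C * lam ^ (1 - β)) * D := by
                rw [h', hs, Real.mul_rpow hlam.le hr.le]; ring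
              _ ≤ _ := by gcongr
          linarith
        · exact h'
      refine ⟨?_, _, _, (((S.jet (y + h) hyha hyh1).translate h).sub
        ((S.jet y hya hy1).const_mul (1 - α))).sub ((((Jet.sqdist a).const_mul (B / R ^ 2)).add
          ((((F.jet y hya).const_mul (2 * s)).sub (F.jet y hya).sq).const_mul N)).const_mul α |>.add
            (Jet.const E)), ?_⟩
      · have hcont : ContinuousAt (fun x => ζ (x + h)) y :=
          ((F.jet (y + h) hyha).translate h).continuousAt
        filter_upwards [F.ev_pos hya hy1, F.ev_lt hya hys', ev_ball hyR',
          hcont.eventually (lt_mem_nhds hyh1)] with z i1 i2 i3 i4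
        exact ⟨ball_subset_closedBall i3, ⟨i1.le, i2.le⟩, i4.le⟩
      · intro hq0
        have hGh : G (y + h) = (1 - α) • G y + α • ((B / R ^ 2) • ((2 : ℝ) • (y - a)) +
            N • ((2 * s) • Z y - (2 * ζ y) • Z y)) := by
          rw [sub_eq_zero, add_zero, sub_eq_iff_eq_add] at hq0
          rw [hq0, add_comm]
        set V := (B / R ^ 2) • ((2 : ℝ) • (y - a)) +
            N • ((2 * s) • Z y - (2 * ζ y) • Z y) with hV
        have hVn : ‖V‖ ≤ 3 * B / R := by
          have j1 : ‖(B / R ^ 2) • ((2 : ℝ) • (y - a))‖ ≤ 2 * B / R := by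
            rw [norm_smul, norm_smul, Real.norm_of_nonneg (by positivity),
              Real.norm_of_nonneg (by norm_num)]
            calc B / R ^ 2 * (2 * ‖y - a‖) ≤ B / R ^ 2 * (2 * R) := by gcongr
              _ = _ := by field_simp
          have j2 : ‖N • ((2 * s) • Z y - (2 * ζ y) • Z y)‖ ≤ B / R := by
            rw [← sub_smul, norm_smul, norm_smul, Real.norm_of_nonneg hN0,
              Real.norm_of_nonneg (by linarith)]
            calc N * ((2 * s - 2 * ζ y) * ‖Z y‖) ≤ N * ((2 * s) * L) := by
                  gcongr
                  · linarith
                  · exact F.Z_le y hya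
              _ = (2 * (n + 1) * L * lam) * (B / (Lam * R)) := by
                  rw [hN, hs, hR]; field_simp
              _ ≤ Lam * (B / (Lam * R)) := by gcongr
              _ = B / R := by field_simp
          have := norm_add_le ((B / R ^ 2) • ((2 : ℝ) • (y - a)))
            (N • ((2 * s) • Z y - (2 * ζ y) • Z y))
          have j3 : 3 * B / R = 2 * B / R + B / R := by ring
          linarith
        have hcv := norm_convex_rpow hp hα.le hα1 (G y) V
        rw [← hGh] at hcv
        have hVp : ‖V‖ ^ p ≤ B / R ^ 2 :=
          (Real.rpow_le_rpow (norm_nonneg _) hVn (by linarith)).trans hBR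
        have hlap : B / R ^ 2 * (2 * n) + N * (2 * s * l y - (2 * ζ y * l y + 2 * ‖Z y‖ ^ 2)) ≤
            -2 * (B / R ^ 2) := by
          have k1 : 2 * s * l y - (2 * ζ y * l y + 2 * ‖Z y‖ ^ 2) ≤ -2 := by
            have := F.l_up y hya
            have k5 : 0 ≤ (s - ζ y) * (-l y) := mul_nonneg (by linarith) (by linarith)
            nlinarith only [k5, F.Z_ge hya]
          have k2 := mul_le_mul_of_nonneg_left k1 hN0
          have k3 : N = (n + 1) * (B / R ^ 2) := by rw [hN]; ring
          rw [k3] at k2 ⊢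
          linarith
        have hf1 := abs_le.1 (S.f_le y hya hy1)
        have hf2 := abs_le.1 (S.f_le (y + h) hyha hyh1)
        have hαl := mul_le_mul_of_nonneg_left hlap hα.le
        have hαV := mul_le_mul_of_nonneg_left hVp hα.le
        rw [← hBR2] at h11
        have hfα : (1 - α) * f y ≤ M := by nlinarith only [hf1.2, hf1.1, hα, hα1, hM]
        linarith)
  have hfin := key y₁ ⟨hy₁R, ⟨hpos.le, by
    have : 1 * r ≤ s := by rw [hs]; gcongr; linarith
    linarith⟩, by show 0 ≤ ζ (y₁ + h); rw [hy12, heq]; exact hpos.le⟩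
  rw [hy12] at hfin
  have hw1 := abs_le.1 (S.growth y₁ (hsubx _ hy₁R) hpos.le)
  have m1 : α * -(w y₁) ≤ ε * D := by
    calc α * -(w y₁) ≤ α * (C * ζ y₁ ^ (1 - β)) := by gcongr; linarith
      _ ≤ α * (C * D) := by rw [hD]; gcongr
      _ = α * C * D := by ring
      _ ≤ _ := by gcongr
  have m2 : α * (B / R ^ 2 * ‖y₁ - a‖ ^ 2 + N * (2 * s * ζ y₁ - ζ y₁ ^ 2)) ≤ ε * D := by
    calc α * (B / R ^ 2 * ‖y₁ - a‖ ^ 2 + N * (2 * s * ζ y₁ - ζ y₁ ^ 2))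
        ≤ α * (B / R ^ 2 * (2 * r) ^ 2 + N * (2 * s * r)) := by
          gcongr
          have : 2 * s * ζ y₁ ≤ 2 * s * r := by gcongr
          linarith [sq_nonneg (ζ y₁)]
      _ = α * (c0 * Lam ^ (1 - β) * (4 + 2 * (n + 1) * lam) / Lam ^ 2) * D := by
          rw [hN, hBD, hR, hs]; field_simp; ring
      _ ≤ _ := by gcongr
  linarith

end LemmaC


lemma tendsto_rpow_neg_zero {y : ℝ} (hy : y < 0) :
    Tendsto (fun x : ℝ => x ^ y) (nhdsWithin 0 (Ioi 0)) atTop := by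
  have h1 : Tendsto (fun x : ℝ => (x⁻¹) ^ (-y)) (nhdsWithin 0 (Ioi 0)) atTop :=
    (tendsto_rpow_atTop (by linarith : 0 < -y)).comp tendsto_inv_nhdsGT_zero
  refine h1.congr' ?_
  filter_upwards [self_mem_nhdsWithin] with x hx
  rw [Real.inv_rpow (le_of_lt hx), Real.rpow_neg (le_of_lt hx), inv_inv]

lemma tendsto_rpow_zero {y : ℝ} (hy : 0 < y) :
    Tendsto (fun x : ℝ => x ^ y) (nhdsWithin 0 (Ioi 0)) (nhds 0) := by
  have := (Real.continuousAt_rpow_const 0 y (Or.inr hy.le)).tendsto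
  rw [Real.zero_rpow hy.ne'] at this
  exact this.mono_left nhdsWithin_le_nhds

lemma tendsto_mul_zero_right {c : ℝ} (hc : 0 < c) :
    Tendsto (fun x : ℝ => c * x) (nhdsWithin 0 (Ioi 0)) (nhdsWithin 0 (Ioi 0)) := by
  refine tendsto_nhdsWithin_iff.2 ⟨?_, ?_⟩
  · have : Tendsto (fun x : ℝ => c * x) (nhds 0) (nhds (c * 0)) :=
      (continuous_const.mul continuous_id).tendsto 0
    rw [mul_zero] at this
    exact this.mono_left nhdsWithin_le_nhds
  · filter_upwards [self_mem_nhdsWithin] with x hx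
    exact mul_pos hc hx

lemma exists_of_eventually_pos {P : ℝ → Prop} (h : ∀ᶠ r in nhdsWithin 0 (Ioi 0), P r) :
    ∃ r₀ > (0 : ℝ), ∀ r, 0 < r → r < r₀ → P r := by
  obtain ⟨u, hu, hs⟩ := mem_nhdsGT_iff_exists_Ioo_subset.1 h
  exact ⟨u, hu, fun r h1 h2 => hs ⟨h1, h2⟩⟩

section LemmaC2
variable {n : ℕ} {a : EE n} {ρ L : ℝ} {ζ : EE n → ℝ} {Z : EE n → EE n}
    {l : EE n → ℝ} {e : EE n} {p β C M : ℝ}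

lemma translation (F : BFrame a ρ L ζ Z l e) (hβ0 : 0 < β) (hβ1 : β < 1) (hp : 2 ≤ p)
    (hβp : β * p = 1 + β) (hC : 0 ≤ C) (hM : 0 ≤ M) {ε : ℝ} (hε : 0 < ε) :
    ∀ᶠ r in nhdsWithin (0 : ℝ) (Ioi 0), ∀ (w : EE n → ℝ) (G : EE n → EE n) (f : EE n → ℝ),
      Sol a ρ ζ p β C M w G f → ∀ y₁ y₂ : EE n, ‖y₁ - a‖ ≤ 2 * r → ‖y₂ - a‖ ≤ 2 * r →
      0 < ζ y₁ → ζ y₁ ≤ r → ζ y₂ = ζ y₁ → w y₂ ≤ w y₁ + ε * r ^ (1 - β) := by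
  have hL := F.L_one
  have hρ := F.ρ_pos
  have hq : 0 < 1 - β := by linarith
  set ε₁ := ε / 3 with hε₁
  have hε₁0 : 0 < ε₁ := by positivity
  obtain ⟨lam, h1, h2⟩ : ∃ lam : ℝ, 8 * L ≤ lam ∧ C * (lam / 2) ^ (-β) * 4 ≤ ε₁ / 2 := by
    have t1 : Tendsto (fun x : ℝ => C * (x / 2) ^ (-β) * 4) atTop (nhds 0) := by
      have := ((tendsto_rpow_neg_atTop hβ0).comp
        (tendsto_id.atTop_div_const (by norm_num : (0 : ℝ) < 2))).const_mul C |>.mul_const 4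
      simpa using this
    exact ((eventually_ge_atTop _).and (t1.eventually (ge_mem_nhds (by positivity)))).exists
  have hlam : 0 < lam := by linarith
  set α := min 1 (ε₁ / (2 * (C * lam ^ (1 - β) + C + 1))) with hα
  have hX : 0 ≤ C * lam ^ (1 - β) := by positivity
  have hα0 : 0 < α := by rw [hα]; apply lt_min one_pos; positivity
  have hα1 : α ≤ 1 := min_le_left _ _
  have hα2 : α * (C * lam ^ (1 - β) + C + 1) ≤ ε₁ / 2 := by
    have : α ≤ ε₁ / (2 * (C * lam ^ (1 - β) + C + 1)) := min_le_right _ _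
    calc _ ≤ ε₁ / (2 * (C * lam ^ (1 - β) + C + 1)) * (C * lam ^ (1 - β) + C + 1) := by gcongr
      _ = _ := by field_simp
  have h3 : α * (C * lam ^ (1 - β)) ≤ ε₁ / 2 := by nlinarith [mul_nonneg hα0.le hC]
  have h4 : α * C ≤ ε₁ := by nlinarith [mul_nonneg hα0.le hX]
  obtain ⟨Lam, hLam1, h5, h6, h7⟩ : ∃ Lam : ℝ, 1 ≤ Lam ∧ 2 * (n + 1) * L * lam ≤ Lam ∧
      2 * C * (2 * lam) ^ (1 - β) ≤ α * ((1 / 9) * Lam ^ (1 - β)) ∧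
      α * ((1 / 9) * Lam ^ (1 - β) * (4 + 2 * (n + 1) * lam) / Lam ^ 2) ≤ ε₁ := by
    have t1 : Tendsto (fun x : ℝ => α * ((1 / 9) * x ^ (1 - β))) atTop atTop :=
      ((tendsto_rpow_atTop hq).const_mul_atTop (by norm_num)).const_mul_atTop hα0
    have t2 : Tendsto (fun x : ℝ => α * ((1 / 9) * (4 + 2 * (n + 1) * lam) * x⁻¹)) atTop (nhds 0) := by
      simpa using (tendsto_inv_atTop_zero.const_mul ((1 / 9) * (4 + 2 * ((n : ℝ) + 1) * lam))).const_mul α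
    obtain ⟨x, i1, i2, i3, i4⟩ := ((eventually_ge_atTop (1 : ℝ)).and
      ((eventually_ge_atTop (2 * (n + 1) * L * lam)).and
      ((t1.eventually_ge_atTop (2 * C * (2 * lam) ^ (1 - β))).and
        (t2.eventually (ge_mem_nhds hε₁0))))).exists
    refine ⟨x, i1, i2, i3, le_trans ?_ i4⟩
    have hx0 : 0 < x := by linarith
    have j1 : x ^ (1 - β) ≤ x := by
      conv_rhs => rw [← Real.rpow_one x]
      exact Real.rpow_le_rpow_of_exponent_le i1 (by linarith)
    have j2 : (1 / 9) * (4 + 2 * (n + 1) * lam) * x⁻¹ = (1 / 9) * x * (4 + 2 * (n + 1) * lam) / x ^ 2 := by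
      field_simp
    rw [j2]
    gcongr
  have hLam0 : 0 < Lam := by linarith
  have h8 : (3 * (1 / 9) : ℝ) ^ p ≤ 1 / 9 := by
    have := Real.rpow_le_rpow_of_exponent_ge (by norm_num : (0 : ℝ) < 3 * (1 / 9)) (by norm_num) hp
    refine this.trans ?_
    rw [Real.rpow_two]; norm_num
  have t9 : Tendsto (fun r : ℝ => C * (4 * L * (Lam + 2) * r) ^ (1 - β)) (nhdsWithin 0 (Ioi 0)) (nhds 0) := by
    have := ((tendsto_rpow_zero hq).comp
      (tendsto_mul_zero_right (by positivity : 0 < 4 * L * (Lam + 2)))).const_mul C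
    simpa using this
  have t10 : Tendsto (fun r : ℝ => (Lam + 4) * r) (nhdsWithin 0 (Ioi 0)) (nhds 0) :=
    (tendsto_mul_zero_right (by positivity)).mono_right nhdsWithin_le_nhds
  have t11 : Tendsto (fun r : ℝ => α * ((1 / 9) * (Lam * r) ^ (-1 - β))) (nhdsWithin 0 (Ioi 0)) atTop :=
    (((tendsto_rpow_neg_zero (by linarith)).comp (tendsto_mul_zero_right hLam0)).const_mul_atTop
      (by norm_num)).const_mul_atTop hα0
  filter_upwards [self_mem_nhdsWithin, t9.eventually (ge_mem_nhds hε₁0),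
    t10.eventually (gt_mem_nhds hρ), t11.eventually_gt_atTop (2 * M)] with r hr h9 h10 h11
  intro w G f S y₁ y₂ hy₁ hy₂ hpos hle heq
  have := translation_core F hβ0 hβ1 (by linarith) hβp hC hM hr hlam hα0 hα1 (by norm_num) h1 h2 h3 h4
    h5 h6 h7 h8 h9 h10 h11 S hy₁ hy₂ hpos hle heq
  rw [hε₁] at this
  linarith

end LemmaC2


section LemmaD
variable {n : ℕ} {a : EE n} {ρ L : ℝ} {ζ : EE n → ℝ} {Z : EE n → EE n}
    {l : EE n → ℝ} {e : EE n} {p β C M : ℝ} {w : EE n → ℝ} {G : EE n → EE n} {f : EE n → ℝ}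

set_option maxHeartbeats 800000 in
lemma hopf_core (F : BFrame a ρ L ζ Z l e) (hβ0 : 0 < β) (hβ1 : β < 1)
    {r κ m CB s : ℝ} (hr : 0 < r) (hκ : 0 < κ) (hκ1 : κ ≤ 1 / 4) (hm : 0 < m) (hCB : 0 ≤ CB)
    (hs : s = κ * r) (hc1 : 12 * (L * s + 2 * n * κ ^ 2) ≤ 1)
    (hc2 : M < m * s ^ (-1 - β) / 8) {x₀ : EE n} (hx₀ : closedBall x₀ r ⊆ ball a ρ)
    (hζ₀ : ζ x₀ = 0) (S : Sol a ρ ζ p β C M w G f)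
    (hlow : ∀ x ∈ closedBall x₀ r, 0 < ζ x → -CB * ζ x ≤ w x)
    (hlev : ∀ x ∈ closedBall x₀ r, ζ x = s → m * s ^ (1 - β) ≤ w x) :
    ∀ x ∈ closedBall x₀ r, 0 ≤ ζ x → ζ x ≤ s → 0 ≤ ζ x - s / r ^ 2 * ‖x - x₀‖ ^ 2 →
      m * s ^ (-β) / 2 * (ζ x - s / r ^ 2 * ‖x - x₀‖ ^ 2) ≤ w x + CB * ζ x := by
  have hL := F.L_one
  have hs0 : 0 < s := by rw [hs]; positivity
  set k := m * s ^ (-β) / 2 with hk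
  have hk0 : 0 < k := by positivity
  set z : EE n → ℝ := fun x => ζ x - s / r ^ 2 * ‖x - x₀‖ ^ 2 with hz
  have hcζ : ContinuousOn ζ (closedBall x₀ r) := F.cont.mono hx₀
  have hcz : ContinuousOn z (closedBall x₀ r) :=
    hcζ.sub (by fun_prop : Continuous (fun y : EE n => s / r ^ 2 * ‖y - x₀‖ ^ 2)).continuousOn
  set K := closedBall x₀ r ∩ (fun x => (ζ x, z x)) ⁻¹' (Icc 0 s ×ˢ Ici 0) with hK
  have hKc : IsCompact K :=
    (isCompact_closedBall x₀ r).of_isClosed_subset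
      ((hcζ.prodMk hcz).preimage_isClosed_of_isClosed isClosed_closedBall
        (isClosed_Icc.prod isClosed_Ici)) inter_subset_left
  have key := max_principle (S := K)
    (g := fun y => k * (z y + 1 / s * z y ^ 2) - (w y + CB * ζ y)) hKc (by
      have c1 : ContinuousOn w K :=
        S.cont.mono fun y hy => ⟨hx₀ hy.1, hy.2.1.1⟩
      have c3 : ContinuousOn ζ K := hcζ.mono inter_subset_left
      have c4 : ContinuousOn z K := hcz.mono inter_subset_left
      exact (continuousOn_const.mul (c4.add (continuousOn_const.mul (c4.pow 2)))).sub
        (c1.add (continuousOn_const.mul c3)))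
    (by
      rintro y ⟨hyR, ⟨hy0, hys⟩, hyz⟩ hg
      simp only [mem_Ici] at hy0 hys hyz
      have hya := hx₀ hyR
      have hlow' : 0 ≤ w y + CB * ζ y := by
        rcases hy0.eq_or_lt with h | h
        · rw [S.zero y hya h.symm, ← h]; simp
        · linarith [hlow y hyR h]
      have hzζ : z y ≤ ζ y := by
        have : 0 ≤ s / r ^ 2 * ‖y - x₀‖ ^ 2 := by positivity
        simp only [hz]; linarith
      have hz1 : 0 < z y := by
        rcases hyz.eq_or_lt with h | h
        · exfalso
          rw [← h] at hg
          simp at hg; linarith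
        · exact h
      have hy1 : 0 < ζ y := by linarith
      have hz2 : 1 / s * z y ^ 2 ≤ s := by
        rw [one_div, inv_mul_le_iff₀ hs0]; nlinarith
      have hys' : ζ y < s := by
        rcases hys.eq_or_lt with h | h
        · exfalso
          have h1 := hlev y hyR h
          have h2 : k * (z y + 1 / s * z y ^ 2) ≤ k * (s + s) := by gcongr; linarith
          have h3 : k * (s + s) = m * s ^ (1 - β) := by
            rw [hk, Real.rpow_sub hs0, Real.rpow_one, Real.rpow_neg hs0.le]; field_simp; ring
          have h4 : 0 ≤ CB * ζ y := by positivity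
          linarith
        · exact h
      rw [mem_closedBall, dist_eq_norm] at hyR
      have hyR' : ‖y - x₀‖ < r := by
        rcases hyR.eq_or_lt with h | h
        · exfalso
          have : z y = ζ y - s := by
            simp only [hz]; rw [h]; field_simp
          linarith
        · exact h
      have hzj : Jet z y _ _ := (F.jet y hya).sub ((Jet.sqdist x₀).const_mul (s / r ^ 2))
      refine ⟨?_, _, _, ((hzj.add (hzj.sq.const_mul (1 / s))).const_mul k).sub
        ((S.jet y hya hy1).add ((F.jet y hya).const_mul CB)), ?_⟩
      · filter_upwards [F.ev_pos hya hy1, F.ev_lt hya hys', ev_ball hyR',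
          hzj.continuousAt.eventually (lt_mem_nhds hz1)] with z i1 i2 i3 i4
        exact ⟨ball_subset_closedBall i3, ⟨i1.le, i2.le⟩, i4.le⟩
      · intro _
        set q := Z y - (s / r ^ 2) • (2 : ℝ) • (y - x₀) with hq
        have hqn : 1 / 2 ≤ ‖q‖ := by
          have i1 := real_inner_le_norm q e
          rw [F.e_norm, mul_one] at i1
          have i2 : ⟪q, e⟫ = ⟪Z y, e⟫ - s / r ^ 2 * (2 * ⟪y - x₀, e⟫) := by
            rw [hq, inner_sub_left, inner_smul_left, inner_smul_left]; simp
          have i3 := F.dir y hya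
          have i4 := real_inner_le_norm (y - x₀) e
          rw [F.e_norm, mul_one] at i4
          have i5 : s / r ^ 2 * (2 * ⟪y - x₀, e⟫) ≤ s / r ^ 2 * (2 * r) := by gcongr; linarith
          have i6 : s / r ^ 2 * (2 * r) = 2 * κ := by rw [hs]; field_simp
          linarith
        have hqn2 : 1 / 4 ≤ ‖q‖ ^ 2 := by nlinarith
        have hf := abs_le.1 (S.f_le y hya hy1)
        have hl := F.l_up y hya
        have hl' := F.l_lo y hya
        have hG : 0 ≤ ‖G y‖ ^ p := by positivity
        have hCl : CB * l y ≤ 0 := mul_nonpos_of_nonneg_of_nonpos hCB (by linarith)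
        set lz := l y - s / r ^ 2 * (2 * n) with hlz
        have hY : -(1 / (12 * s)) ≤ lz := by
          have i1 : s / r ^ 2 * (2 * n) = 2 * n * κ ^ 2 / s := by rw [hs]; field_simp
          have i2 : L + 2 * n * κ ^ 2 / s ≤ 1 / (12 * s) := by
            rw [le_div_iff₀ (by positivity)]
            have : (L + 2 * n * κ ^ 2 / s) * (12 * s) = 12 * (L * s + 2 * n * κ ^ 2) := by
              field_simp
            linarith
          rw [hlz, i1]; linarith
        have hkey : 1 / (4 * s) ≤ lz + 1 / s * (2 * z y * lz + 2 * ‖q‖ ^ 2) := by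
          have i1 : lz + 1 / s * (2 * z y * lz + 2 * ‖q‖ ^ 2) =
            (1 + 2 * (z y / s)) * lz + 2 * ‖q‖ ^ 2 / s := by ring
          have i2 : z y / s ≤ 1 := by rw [div_le_one hs0]; linarith
          have i3 : 0 ≤ z y / s := by positivity
          have i4 : (1 + 2 * (z y / s)) * -(1 / (12 * s)) ≤ (1 + 2 * (z y / s)) * lz := by gcongr
          have i5 : 0 < 1 / (12 * s) := by positivity
          have i6 : 3 * -(1 / (12 * s)) ≤ (1 + 2 * (z y / s)) * -(1 / (12 * s)) := by nlinarith
          have i7 : 2 * (1 / 4) / s ≤ 2 * ‖q‖ ^ 2 / s := by gcongr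
          have i8 : 1 / (4 * s) = 3 * -(1 / (12 * s)) + 2 * (1 / 4) / s := by field_simp; norm_num
          linarith
        have hkey2 := mul_le_mul_of_nonneg_left hkey hk0.le
        have hk3 : k * (1 / (4 * s)) = m * s ^ (-1 - β) / 8 := by
          rw [hk, show -1 - β = -β - 1 by ring, Real.rpow_sub hs0 (-β) 1, Real.rpow_one]
          field_simp; norm_num
        linarith)
  intro x hx h0 h1 h2
  have := key x ⟨hx, ⟨h0, h1⟩, h2⟩
  have h3 : 0 ≤ k * (1 / s * z x ^ 2) := by positivity
  have h4 : k * (z x + 1 / s * z x ^ 2) = k * z x + k * (1 / s * z x ^ 2) := by ring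
  have h5 : k * (z x + 1 / s * z x ^ 2) - (w x + CB * ζ x) ≤ 0 := this
  show k * z x ≤ _
  linarith

end LemmaD


section LemmaE
variable {n : ℕ} {a : EE n} {ρ L : ℝ} {ζ : EE n → ℝ} {Z : EE n → EE n}
    {l : EE n → ℝ} {e : EE n} {p β C M : ℝ} {w : EE n → ℝ} {G : EE n → EE n} {f : EE n → ℝ}

set_option maxHeartbeats 800000 in
lemma upper_core (F : BFrame a ρ L ζ Z l e) (hβ0 : 0 < β) (hβ1 : β < 1) (hp : 1 ≤ p)
    (hβp : β * p = 1 + β) (hC : 0 ≤ C)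
    {r κ m s : ℝ} (hr : 0 < r) (hκ : 0 < κ) (hm : 0 < m)
    (hs : s = κ * r) (hc1 : (7 * L * m) ^ p ≤ m) (hc3 : 8 * n * C * κ ^ 2 ≤ m)
    (hc4 : 4 * C * κ ≤ m * L)
    (hc2 : M < 4 * m * s ^ (-1 - β)) {b : EE n} (hb : closedBall b (r / 2) ⊆ ball a ρ)
    (S : Sol a ρ ζ p β C M w G f)
    (hlev : ∀ x ∈ closedBall b (r / 2), ζ x = s → w x ≤ 3 * m * s ^ (1 - β)) :
    ∀ x ∈ closedBall b (r / 2), 0 ≤ ζ x → ζ x ≤ s →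
      w x ≤ 3 * m * s ^ (-1 - β) * (2 * s * ζ x - ζ x ^ 2) +
        4 * C * s ^ (1 - β) / r ^ 2 * ‖x - b‖ ^ 2 := by
  have hL := F.L_one
  have hs0 : 0 < s := by rw [hs]; positivity
  set X := s ^ (-1 - β) with hX
  have hX0 : 0 < X := by positivity
  have hX2 : s ^ (1 - β) = X * s ^ 2 := by
    rw [hX, show (-1 - β) = (1 - β) - (2 : ℕ) by push_cast; ring, Real.rpow_sub_natCast hs0.ne']
    field_simp
  have hX1 : s ^ (-β) = X * s := by
    rw [hX, show (-1 - β) = (-β) - (1 : ℕ) by push_cast; ring, Real.rpow_sub_natCast hs0.ne']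
    field_simp
  set N := 3 * m * X with hN
  have hN0 : 0 < N := by positivity
  set B := 4 * C * s ^ (1 - β) / r ^ 2 with hB
  have hB0 : 0 ≤ B := by positivity
  have hB' : B = 4 * C * κ ^ 2 * X := by rw [hB, hX2, hs]; field_simp
  have hBr : B * r = 4 * C * κ * (X * s) := by rw [hB', hs]; ring
  have hcζ : ContinuousOn ζ (closedBall b (r / 2)) := F.cont.mono hb
  set K := closedBall b (r / 2) ∩ ζ ⁻¹' (Icc 0 s) with hK
  have hKc : IsCompact K :=
    (isCompact_closedBall b (r / 2)).of_isClosed_subset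
      (hcζ.preimage_isClosed_of_isClosed isClosed_closedBall isClosed_Icc) inter_subset_left
  have key := max_principle (S := K)
    (g := fun y => w y - (N * (2 * s * ζ y - ζ y ^ 2) + B * ‖y - b‖ ^ 2)) hKc (by
      have c1 : ContinuousOn w K :=
        S.cont.mono fun y hy => ⟨hb hy.1, hy.2.1⟩
      have c3 : ContinuousOn ζ K := hcζ.mono inter_subset_left
      have c4 : ContinuousOn (fun y : EE n => ‖y - b‖ ^ 2) K :=
        (by fun_prop : Continuous (fun y : EE n => ‖y - b‖ ^ 2)).continuousOn
      exact c1.sub ((continuousOn_const.mul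
        ((continuousOn_const.mul c3).sub (c3.pow 2))).add (continuousOn_const.mul c4)))
    (by
      rintro y ⟨hyR, hy0, hys⟩ hg
      have hya := hb hyR
      have hlev' := hlev y hyR
      rw [mem_closedBall, dist_eq_norm] at hyR
      have hw := abs_le.1 (S.growth y hya hy0)
      have hφ2 : 0 ≤ N * (2 * s * ζ y - ζ y ^ 2) := by
        apply mul_nonneg hN0.le; nlinarith only [hy0, hys]
      have hφ1 : 0 ≤ B * ‖y - b‖ ^ 2 := by positivity
      have hy1 : 0 < ζ y := by
        rcases hy0.eq_or_lt with h | h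
        · exfalso
          rw [S.zero y hya h.symm] at hg
          linarith
        · exact h
      have hys' : ζ y < s := by
        rcases hys.eq_or_lt with h | h
        · exfalso
          have h1 := hlev' h
          rw [h] at hg
          have h2 : N * (2 * s * s - s ^ 2) = 3 * m * s ^ (1 - β) := by
            rw [hX2, hN]; ring
          linarith
        · exact h
      have hyR' : ‖y - b‖ < r / 2 := by
        rcases hyR.eq_or_lt with h | h
        · exfalso
          rw [h] at hg
          have h1 : B * (r / 2) ^ 2 = C * s ^ (1 - β) := by rw [hB]; field_simp; ring
          have h2 : C * ζ y ^ (1 - β) ≤ C * s ^ (1 - β) := by gcongr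
          linarith
        · exact h
      refine ⟨?_, _, _, (S.jet y hya hy1).sub
          (((((F.jet y hya).const_mul (2 * s)).sub (F.jet y hya).sq).const_mul N).add
            ((Jet.sqdist b).const_mul B)), ?_⟩
      · filter_upwards [F.ev_pos hya hy1, F.ev_lt hya hys', ev_ball hyR'] with z i1 i2 i3
        exact ⟨ball_subset_closedBall i3, i1.le, i2.le⟩
      · intro hq0
        have hGV : G y = N • ((2 * s) • Z y - (2 * ζ y) • Z y) + B • (2 : ℝ) • (y - b) :=
          sub_eq_zero.1 hq0
        have hGn : ‖G y‖ ≤ 7 * L * m * s ^ (-β) := by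
          have j1 : ‖B • ((2 : ℝ) • (y - b))‖ ≤ B * r := by
            rw [norm_smul, norm_smul, Real.norm_of_nonneg hB0, Real.norm_of_nonneg (by norm_num)]
            gcongr; linarith
          have j2 : ‖N • ((2 * s) • Z y - (2 * ζ y) • Z y)‖ ≤ N * (2 * s * L) := by
            rw [← sub_smul, norm_smul, norm_smul, Real.norm_of_nonneg hN0.le,
              Real.norm_of_nonneg (by linarith)]
            gcongr
            · linarith
            · exact F.Z_le y hya
          have j3 := norm_add_le (N • ((2 * s) • Z y - (2 * ζ y) • Z y)) (B • (2 : ℝ) • (y - b))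
          rw [← hGV] at j3
          have j4 : B * r ≤ m * L * (X * s) := by rw [hBr]; gcongr
          rw [hX1]
          have j5 : N * (2 * s * L) = 6 * L * m * (X * s) := by rw [hN]; ring
          linarith
        have hGp : ‖G y‖ ^ p ≤ m * X := by
          refine (Real.rpow_le_rpow (norm_nonneg _) hGn (by linarith)).trans ?_
          rw [Real.mul_rpow (by positivity) (by positivity), ← Real.rpow_mul hs0.le,
            show -β * p = -1 - β by linarith, ← hX]
          gcongr
        have hf := abs_le.1 (S.f_le y hya hy1)
        have hlap : N * (2 * s * l y - (2 * ζ y * l y + 2 * ‖Z y‖ ^ 2)) ≤ N * (-2) := by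
          apply mul_le_mul_of_nonneg_left _ hN0.le
          have := F.l_up y hya
          have k5 : 0 ≤ (s - ζ y) * (-l y) := mul_nonneg (by linarith) (by linarith)
          nlinarith only [k5, F.Z_ge hya]
        have hBn : B * (2 * n) ≤ m * X := by
          rw [hB']
          calc 4 * C * κ ^ 2 * X * (2 * n) = 8 * n * C * κ ^ 2 * X := by ring
            _ ≤ _ := by gcongr
        rw [hN] at hlap ⊢
        linarith)
  intro x hx h0 h1
  have := key x ⟨hx, ⟨h0, h1⟩⟩
  linarith

lemma upper_linear (F : BFrame a ρ L ζ Z l e) (hβ0 : 0 < β) (hβ1 : β < 1) (hp : 1 ≤ p)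
    (hβp : β * p = 1 + β) (hC : 0 ≤ C)
    {r κ m s : ℝ} (hr : 0 < r) (hκ : 0 < κ) (hm : 0 < m)
    (hs : s = κ * r) (hc1 : (7 * L * m) ^ p ≤ m) (hc3 : 8 * n * C * κ ^ 2 ≤ m)
    (hc4 : 4 * C * κ ≤ m * L)
    (hc2 : M < 4 * m * s ^ (-1 - β)) (hrρ : r < ρ) :
    ∃ A ≥ 0, ∃ η > 0, ∀ (w : EE n → ℝ) (G : EE n → EE n) (f : EE n → ℝ),
      Sol a ρ ζ p β C M w G f →
      (∀ x ∈ closedBall a r, ζ x = s → w x ≤ 3 * m * s ^ (1 - β)) →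
      ∀ x ∈ ball a η, 0 < ζ x → w x ≤ A * ζ x := by
  have hL := F.L_one
  have hρ := F.ρ_pos
  have hs0 : 0 < s := by rw [hs]; positivity
  refine ⟨3 * m * s ^ (-1 - β) * (2 * s) + 4 * C * s ^ (1 - β) / r ^ 2, by positivity,
    min (ρ / (4 * L)) (min (r / (4 * L)) (s / L)), by positivity, ?_⟩
  intro w G f S hlev x hx hpos
  rw [mem_ball, dist_eq_norm, lt_min_iff, lt_min_iff] at hx
  obtain ⟨hx1, hx2, hx3⟩ := hx
  obtain ⟨b, τ, hτ0, hτ, hxb, hb0, hxb', hba, hseg⟩ := F.foot hx1 hpos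
  have hxρ : x ∈ ball a ρ := by
    rw [mem_ball, dist_eq_norm]; exact hx1.trans_le (div_le_self hρ.le (by linarith))
  have hζ := F.le_L hxρ (mem_ball_self hρ) F.zero
  have h1 : ζ x ≤ r / 4 := by
    have h2 : L * ‖x - a‖ ≤ L * (r / (4 * L)) := by gcongr
    have h3 : L * (r / (4 * L)) = r / 4 := by field_simp
    linarith
  have h1s : ζ x ≤ s := by
    have h2 : L * ‖x - a‖ ≤ L * (s / L) := by gcongr
    have h3 : L * (s / L) = s := by field_simp
    linarith
  have hxr : ‖x - a‖ < r / 4 :=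
    hx2.trans_le (div_le_div_of_nonneg_left hr.le (by norm_num) (by linarith))
  have hbr : closedBall b (r / 2) ⊆ closedBall a r := by
    intro y hy
    rw [mem_closedBall, dist_eq_norm] at hy ⊢
    have i1 := norm_sub_le_norm_sub_add_norm_sub y b a
    have i2 := norm_sub_le_norm_sub_add_norm_sub b x a
    rw [norm_sub_rev b x] at i2
    linarith
  have := upper_core F hβ0 hβ1 hp hβp hC hr hκ hm hs hc1 hc3 hc4 hc2
    (hbr.trans (closedBall_subset_ball hrρ)) S (fun y hy => hlev y (hbr hy)) x
    (by rw [mem_closedBall, dist_eq_norm]; linarith) hpos.le h1s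
  refine this.trans ?_
  rw [add_mul]
  have i3 : ‖x - b‖ ^ 2 ≤ ζ x := by nlinarith [F.le_one x hxρ, norm_nonneg (x - b)]
  have i4 : 3 * m * s ^ (-1 - β) * (2 * s * ζ x - ζ x ^ 2) ≤ 3 * m * s ^ (-1 - β) * (2 * s) * ζ x := by
    rw [mul_assoc _ (2 * s)]; gcongr; nlinarith [sq_nonneg (ζ x)]
  gcongr

end LemmaE


lemma deriv_nonneg_of_right {f : ℝ → ℝ} {D : ℝ} (h : HasDerivWithinAt f D (Ioi 0) 0) (h0 : f 0 = 0)
    (hpos : ∀ᶠ t in nhdsWithin (0 : ℝ) (Ioi 0), 0 ≤ f t) : 0 ≤ D := by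
  rw [hasDerivWithinAt_iff_tendsto_slope' (by simp)] at h
  refine ge_of_tendsto h ?_
  filter_upwards [hpos, self_mem_nhdsWithin] with t ht ht0
  rw [slope_def_field, h0, sub_zero, sub_zero]
  exact div_nonneg ht (le_of_lt ht0)

section LemmaF
variable {n : ℕ} {w : EE n → ℝ} {G : EE n → EE n} {lw : EE n → ℝ}

/-- One-sided comparison of a function with its reflection. -/
lemma reflect_core {y₀ : EE n} {ρ Q F : ℝ} (hρ : 0 < ρ) (hQ : 0 ≤ Q) (hF : 0 ≤ F)
    (hjet : ∀ y ∈ closedBall y₀ ρ, Jet w y (G y) (lw y))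
    (hw : ∀ y ∈ closedBall y₀ ρ, |w y| ≤ Q)
    (hlw : ∀ y ∈ closedBall y₀ ρ, |lw y| ≤ F) :
    2 * ‖G y₀‖ ≤ (2 * n * Q / ρ ^ 2 + F + 1) * ρ := by
  rcases eq_or_ne (G y₀) 0 with h0 | h0
  · rw [h0]; simp; positivity
  set g₀ := ‖G y₀‖ with hg₀
  have hg0 : 0 < g₀ := norm_pos_iff.2 h0
  set v : EE n := g₀⁻¹ • G y₀ with hv
  have hvn : ‖v‖ = 1 := by rw [hv, norm_smul, norm_inv, norm_norm, ← hg₀]; field_simp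
  have hGv : G y₀ = g₀ • v := by rw [hv, smul_smul]; field_simp; simp
  set σ : EE n ≃ₗᵢ[ℝ] EE n := (ℝ ∙ v)ᗮ.reflection with hσ
  have hσσ : ∀ x, σ (σ x) = x := fun x => Submodule.reflection_reflection _ x
  have hσv : σ v = -v := Submodule.reflection_orthogonalComplement_singleton_eq_neg v
  have hσ0 : ∀ x, ⟪x, v⟫ = 0 → σ x = x := by
    intro x hx
    apply Submodule.reflection_mem_subspace_eq_self
    rw [Submodule.mem_orthogonal_singleton_iff_inner_left]; exact hx
  have hrefl : ∀ y ∈ closedBall y₀ ρ, y₀ + σ (y - y₀) ∈ closedBall y₀ ρ := by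
    intro y hy
    rw [mem_closedBall, dist_eq_norm] at hy ⊢
    rw [add_sub_cancel_left, LinearIsometryEquiv.norm_map]; exact hy
  set k := 2 * n * Q / ρ ^ 2 + F + 1 with hk
  set τ : EE n → ℝ := fun y => ⟪y - y₀, v⟫ with hτ
  have hτc : Continuous τ := by
    simp only [hτ]; fun_prop
  have hτle : ∀ y, τ y ≤ ‖y - y₀‖ := by
    intro y
    have := real_inner_le_norm (y - y₀) v
    rwa [hvn, mul_one] at this
  have hk0 : 0 ≤ k := by positivity
  set K := closedBall y₀ ρ ∩ τ ⁻¹' Ici 0 with hK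
  have hKc : IsCompact K := (isCompact_closedBall y₀ ρ).inter_right (isClosed_Ici.preimage hτc)
  have hWj : ∀ y ∈ closedBall y₀ ρ, Jet (fun y => w y - w (y₀ + σ (y - y₀))) y
      (G y - σ (G (y₀ + σ (y - y₀)))) (lw y - lw (y₀ + σ (y - y₀))) := fun y hy =>
    (hjet y hy).sub ((hjet _ (hrefl y hy)).reflect σ hσσ y₀)
  have hτj : ∀ y, Jet τ y v 0 := fun y => Jet.linear y₀ v
  have hgj : ∀ y ∈ closedBall y₀ ρ, Jet (fun y => (w y - w (y₀ + σ (y - y₀))) -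
      (2 * Q / ρ ^ 2 * ‖y - y₀‖ ^ 2 + k * (ρ * τ y - τ y ^ 2))) y _ _ := fun y hy =>
    (hWj y hy).sub (((Jet.sqdist y₀).const_mul (2 * Q / ρ ^ 2)).add
      ((((hτj y).const_mul ρ).sub (hτj y).sq).const_mul k))
  have key := max_principle hKc
    (fun y hy => (hgj y hy.1).continuousAt.continuousWithinAt) (by
      rintro y ⟨hyR, hy0⟩ hg
      simp only [mem_preimage, mem_Ici] at hy0
      have h1 := hw y hyR
      have h2 := hw _ (hrefl y hyR)
      have h3 := abs_le.1 (hlw y hyR)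
      have h4 := abs_le.1 (hlw _ (hrefl y hyR))
      have hj := hgj y hyR
      rw [mem_closedBall, dist_eq_norm] at hyR
      have hτy := hτle y
      have hb1 : 0 ≤ 2 * Q / ρ ^ 2 * ‖y - y₀‖ ^ 2 := by positivity
      have hb2 : 0 ≤ k * (ρ * τ y - τ y ^ 2) := by
        apply mul_nonneg hk0; nlinarith
      have hy1 : 0 < τ y := by
        rcases hy0.eq_or_lt with h | h
        · exfalso
          have : y₀ + σ (y - y₀) = y := by rw [hσ0 _ h.symm]; abel
          rw [this] at hg
          linarith
        · exact h
      have hyR' : ‖y - y₀‖ < ρ := by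
        rcases hyR.eq_or_lt with h | h
        · exfalso
          rw [h, div_mul_cancel₀ _ (by positivity)] at hg
          have := abs_le.1 h1
          have := abs_le.1 h2
          linarith
        · exact h
      refine ⟨?_, _, _, hj, ?_⟩
      · filter_upwards [ev_ball hyR', hτc.continuousAt.eventually (lt_mem_nhds hy1)] with z i1 i2
        exact ⟨ball_subset_closedBall i1, i2.le⟩
      · intro _
        rw [hvn]
        have e1 : 2 * Q / ρ ^ 2 * (2 * n) = 2 * (2 * n * Q / ρ ^ 2) := by ring
        rw [e1, hk]
        nlinarith)
  have hline : HasDerivAt (fun t : ℝ => y₀ + t • v) v 0 := by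
    simpa using ((hasDerivAt_id (0 : ℝ)).smul_const v).const_add y₀
  have hy00 : y₀ + (0 : ℝ) • v = y₀ := by simp
  have hmem0 : y₀ ∈ closedBall y₀ ρ := mem_closedBall_self hρ.le
  have hd := (hgj (y₀ + (0 : ℝ) • v) (by rw [hy00]; exact hmem0)).hasFDerivAt.comp_hasDerivAt 0 hline
  have hd' := (hd.neg).hasDerivWithinAt (s := Ioi 0)
  have := deriv_nonneg_of_right hd' (by simp [hτ]) (by
    have : ∀ᶠ t in nhdsWithin (0 : ℝ) (Ioi 0), t < ρ := nhdsWithin_le_nhds (gt_mem_nhds hρ)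
    filter_upwards [self_mem_nhdsWithin, this] with t ht0 ht1
    have ht0' : 0 < t := ht0
    have hm : y₀ + t • v ∈ K := by
      refine ⟨?_, ?_⟩
      · rw [mem_closedBall, dist_eq_norm, add_sub_cancel_left, norm_smul, hvn,
          Real.norm_of_nonneg ht0'.le]; linarith
      · simp only [hτ, mem_preimage, mem_Ici, add_sub_cancel_left, inner_smul_left]
        rw [real_inner_self_eq_norm_sq, hvn]; simpa using ht0'.le
    have := key _ hm
    simp only [Pi.neg_apply, Function.comp]
    linarith)
  have hvv : ⟪v, v⟫ = (1 : ℝ) := by rw [real_inner_self_eq_norm_sq, hvn]; norm_num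
  have hσG : σ (G y₀) = -G y₀ := by rw [hGv, map_smul, hσv, smul_neg]
  rw [innerSL_apply_apply] at this
  simp only [sub_self, map_zero, add_zero, hσG, hτ, inner_zero_left, smul_zero, mul_zero,
    zero_smul, sub_zero, sub_neg_eq_add, zero_add] at this
  have hGi : ⟪G y₀, v⟫ = g₀ := by rw [hGv, real_inner_smul_left, hvv, mul_one]
  rw [inner_sub_left, inner_add_left, real_inner_smul_left, real_inner_smul_left, hvv, hGi] at this
  linarith

/-- Interior gradient estimate (Brandt method). -/
lemma interior_gradient {x₀ : EE n} {d A M C₁ : ℝ} (hd : 0 < d) (hA : 0 ≤ A) (hM : 0 ≤ M)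
    (hC₁ : 0 ≤ C₁)
    (hjet : ∀ y ∈ closedBall x₀ d, Jet w y (G y) (lw y))
    (hGc : ContinuousOn G (closedBall x₀ d))
    (hw : ∀ y ∈ closedBall x₀ d, |w y| ≤ A * d)
    (hlw : ∀ y ∈ closedBall x₀ d, |lw y| ≤ M + C₁ / d * ‖G y‖) :
    ‖G x₀‖ ≤ 4 * n * A * (1 + C₁) + (M + 1) * d := by
  have hx₀ : x₀ ∈ closedBall x₀ d := mem_closedBall_self hd.le
  obtain ⟨y₀, hy₀, hmax⟩ := (isCompact_closedBall x₀ d).exists_isMaxOn ⟨x₀, hx₀⟩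
    (f := fun y => (d - ‖y - x₀‖) * ‖G y‖)
    (ContinuousOn.mul (by fun_prop) hGc.norm)
  set N := (d - ‖y₀ - x₀‖) * ‖G y₀‖ with hN
  have hN1 : d * ‖G x₀‖ ≤ N := by
    have : (d - ‖x₀ - x₀‖) * ‖G x₀‖ ≤ N := hmax hx₀
    simpa using this
  have hgoal : N ≤ (4 * n * A * (1 + C₁) + (M + 1) * d) * d → ‖G x₀‖ ≤ 4 * n * A * (1 + C₁) + (M + 1) * d := by
    intro h
    have : ‖G x₀‖ * d ≤ (4 * n * A * (1 + C₁) + (M + 1) * d) * d := by linarith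
    exact le_of_mul_le_mul_right this hd
  apply hgoal
  rw [mem_closedBall, dist_eq_norm] at hy₀
  rcases hy₀.eq_or_lt with h | h
  · rw [hN, h, sub_self, zero_mul]; positivity
  set d₀ := d - ‖y₀ - x₀‖ with hd₀
  have hd₀0 : 0 < d₀ := by linarith
  have hd₀d : d₀ ≤ d := by linarith [norm_nonneg (y₀ - x₀)]
  have hN0 : 0 ≤ N := by positivity
  set θ := 1 / (2 * (1 + C₁)) with hθ
  have hθ0 : 0 < θ := by positivity
  have hθ1 : θ ≤ 1 / 2 := by
    rw [hθ]; apply one_div_le_one_div_of_le (by norm_num); linarith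
  have hθ2 : 2 * C₁ * θ ≤ 1 := by
    rw [hθ, mul_one_div, div_le_one (by positivity)]; linarith
  have hsub : ∀ y ∈ closedBall y₀ (θ * d₀), y ∈ closedBall x₀ d ∧ d₀ / 2 ≤ d - ‖y - x₀‖ := by
    intro y hy
    rw [mem_closedBall, dist_eq_norm] at hy
    have h1 := norm_sub_le_norm_sub_add_norm_sub y y₀ x₀
    have h2 : θ * d₀ ≤ 1 / 2 * d₀ := by gcongr
    refine ⟨?_, by linarith⟩
    rw [mem_closedBall, dist_eq_norm]; linarith
  have hG2 : ∀ y ∈ closedBall y₀ (θ * d₀), ‖G y‖ ≤ 2 * N / d₀ := by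
    intro y hy
    have h1 : (d - ‖y - x₀‖) * ‖G y‖ ≤ N := hmax (hsub y hy).1
    have h2 : d₀ / 2 * ‖G y‖ ≤ (d - ‖y - x₀‖) * ‖G y‖ :=
      mul_le_mul_of_nonneg_right (hsub y hy).2 (norm_nonneg _)
    rw [le_div_iff₀ hd₀0]; linarith
  have := reflect_core (y₀ := y₀) (ρ := θ * d₀) (Q := A * d) (F := M + C₁ / d * (2 * N / d₀))
    (by positivity) (by positivity) (by positivity)
    (fun y hy => hjet y (hsub y hy).1) (fun y hy => hw y (hsub y hy).1)
    (fun y hy => (hlw y (hsub y hy).1).trans (by gcongr; exact hG2 y hy))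
  have h1 : N = d₀ * ‖G y₀‖ := hN
  have h2 : 2 * N ≤ (2 * n * (A * d) / (θ * d₀) ^ 2 + (M + C₁ / d * (2 * N / d₀)) + 1) * (θ * d₀) * d₀ := by
    rw [h1]; rw [h1] at this
    nlinarith
  have h3 : (2 * n * (A * d) / (θ * d₀) ^ 2 + (M + C₁ / d * (2 * N / d₀)) + 1) * (θ * d₀) * d₀ =
      2 * n * A * d / θ + (M + 1) * θ * d₀ ^ 2 + (2 * C₁ * θ) * N * (d₀ / d) := by
    field_simp; ring
  have h4 : (2 * C₁ * θ) * N * (d₀ / d) ≤ 1 * N * 1 := by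
    gcongr
    rw [div_le_one hd]; exact hd₀d
  have h5 : (M + 1) * θ * d₀ ^ 2 ≤ (M + 1) * 1 * d ^ 2 := by gcongr; linarith
  have h6 : 2 * n * A * d / θ = 4 * n * A * (1 + C₁) * d := by
    rw [hθ]; field_simp; ring
  rw [h3, h6] at h2
  linarith

end LemmaF


section LemmaF2
variable {n : ℕ} {a : EE n} {ρ L : ℝ} {ζ : EE n → ℝ} {Z : EE n → EE n}
    {l : EE n → ℝ} {e : EE n} {p β C M : ℝ} {w : EE n → ℝ} {G : EE n → EE n} {f : EE n → ℝ}

lemma grad_bound (F : BFrame a ρ L ζ Z l e) (hβ0 : 0 < β) (hp : 2 < p)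
    (hβp : β * p = 1 + β) (hC : 0 ≤ C) (hM : 0 ≤ M) (S : Sol a ρ ζ p β C M w G f)
    (hGc : ContinuousOn G {x | x ∈ ball a ρ ∧ 0 < ζ x}) {A η : ℝ} (hA : 0 ≤ A) (hη : η ≤ ρ)
    (hwA : ∀ x ∈ ball a η, 0 < ζ x → |w x| ≤ A * ζ x) :
    ∀ x ∈ ball a (η / 2), 0 < ζ x →
      ‖G x‖ ≤ 4 * n * (3 * L * A) * (1 + C ^ (p - 1)) + (M + 1) := by
  intro x hx hpos
  have hL := F.L_one
  have hρ := F.ρ_pos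
  rw [mem_ball, dist_eq_norm] at hx
  have hxρ : x ∈ ball a ρ := by
    rw [mem_ball, dist_eq_norm]; linarith [norm_nonneg (x - a)]
  have hζ := F.le_L hxρ (mem_ball_self hρ) F.zero
  set d := ζ x / (2 * L) with hd
  have hd0 : 0 < d := by positivity
  have hLd : L * d = ζ x / 2 := by rw [hd]; field_simp
  have hdη : d ≤ ‖x - a‖ / 2 := by
    rw [hd, div_le_div_iff₀ (by positivity) (by norm_num)]; linarith
  have hd1 : d ≤ 1 := by nlinarith [F.le_one x hxρ]
  have hball : ∀ y ∈ closedBall x d, y ∈ ball a η := by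
    intro y hy
    rw [mem_closedBall, dist_eq_norm] at hy
    rw [mem_ball, dist_eq_norm]
    linarith [norm_sub_le_norm_sub_add_norm_sub y x a]
  have hballρ : ∀ y ∈ closedBall x d, y ∈ ball a ρ := fun y hy => ball_subset_ball hη (hball y hy)
  have hζy : ∀ y ∈ closedBall x d, ζ x / 2 ≤ ζ y ∧ ζ y ≤ 3 * (ζ x / 2) := by
    intro y hy
    have h1 := F.lip (hballρ y hy) hxρ
    rw [mem_closedBall, dist_eq_norm] at hy
    have h2 : L * ‖y - x‖ ≤ L * d := by gcongr
    have h3 := abs_le.1 (h1.trans h2)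
    constructor <;> linarith [h3.1, h3.2]
  have hζ0 : ∀ y ∈ closedBall x d, 0 < ζ y := fun y hy => by linarith [(hζy y hy).1]
  have := interior_gradient (w := w) (G := G) (lw := fun y => f y - ‖G y‖ ^ p)
    (A := 3 * L * A) (M := M) (C₁ := C ^ (p - 1)) hd0 (by positivity) hM (by positivity)
    (fun y hy => S.jet y (hballρ y hy) (hζ0 y hy))
    (hGc.mono fun y hy => ⟨hballρ y hy, hζ0 y hy⟩)
    (fun y hy => by
      refine (hwA y (hball y hy) (hζ0 y hy)).trans ?_
      have h1 := (hζy y hy).2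
      calc A * ζ y ≤ A * (3 * (ζ x / 2)) := by gcongr
        _ = _ := by rw [← hLd]; ring)
    (fun y hy => by
      have h1 := S.f_le y (hballρ y hy) (hζ0 y hy)
      have h2 := S.grad y (hballρ y hy) (hζ0 y hy)
      have h3 : ‖G y‖ ^ p ≤ C ^ (p - 1) / d * ‖G y‖ := by
        have e1 : ‖G y‖ ^ p = ‖G y‖ ^ (p - 1) * ‖G y‖ := by
          rcases (norm_nonneg (G y)).eq_or_lt with h | h
          · rw [← h, Real.zero_rpow (by linarith), mul_zero]
          · rw [Real.rpow_sub h, Real.rpow_one]; field_simp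
        rw [e1]
        gcongr
        calc ‖G y‖ ^ (p - 1) ≤ (C * ζ y ^ (-β)) ^ (p - 1) :=
              Real.rpow_le_rpow (norm_nonneg _) h2 (by linarith)
          _ = C ^ (p - 1) * (ζ y)⁻¹ := by
              rw [Real.mul_rpow hC (Real.rpow_nonneg (hζ0 y hy).le _),
                ← Real.rpow_mul (hζ0 y hy).le, show -β * (p - 1) = -1 by linarith,
                Real.rpow_neg_one]
          _ ≤ C ^ (p - 1) / d := by
              rw [div_eq_mul_inv]
              gcongr
              nlinarith [(hζy y hy).1]
      have h4 : 0 ≤ ‖G y‖ ^ p := by positivity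
      have h5 := abs_le.1 h1
      rw [abs_le]; constructor <;> linarith)
  refine this.trans ?_
  have : (M + 1) * d ≤ (M + 1) * 1 := by gcongr
  linarith

end LemmaF2

lemma continuous_lap {n : ℕ} : Continuous (lap : (EE n →L[ℝ] EE n) → ℝ) := by
  unfold lap
  fun_prop

lemma exists_frame {n : ℕ} {Ω : Set (EE n)} (hΩo : IsOpen Ω) (hΩ : IsC2Boundary Ω) {a : EE n}
    (ha : a ∈ frontier Ω) :
    ∃ (ρ L : ℝ) (ζ : EE n → ℝ) (Z : EE n → EE n) (l : EE n → ℝ) (e : EE n),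
      BFrame a ρ L ζ Z l e ∧ ∀ x ∈ ball a ρ, (x ∈ Ω ↔ 0 < ζ x) ∧ (x ∈ frontier Ω ↔ ζ x = 0) := by
  obtain ⟨f, U, hU, hf, hf0, hΩ1, hΩ2⟩ := hΩ a ha
  obtain ⟨ε, hε, hεU⟩ := Metric.mem_nhds_iff.1 hU
  set V := ball a ε with hV
  have hVo : IsOpen V := isOpen_ball
  have haV : a ∈ V := mem_ball_self hε
  set g : EE n → ℝ := fun y => -f y with hg
  have hgC : ContDiffOn ℝ 2 g V := (hf.mono hεU).neg
  have hΩ1' : ∀ x ∈ V, (x ∈ Ω ↔ 0 < g x) := by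
    intro x hx
    have : x ∈ U ∩ Ω ↔ x ∈ U ∩ {y | f y < 0} := by rw [hΩ1]
    simp only [mem_inter_iff, hεU hx, true_and, mem_setOf_eq] at this
    rw [this]; simp [hg]
  have hΩ2' : ∀ x ∈ V, (x ∈ frontier Ω ↔ g x = 0) := by
    intro x hx
    have : x ∈ U ∩ frontier Ω ↔ x ∈ U ∩ {y | f y = 0} := by rw [hΩ2]
    simp only [mem_inter_iff, hεU hx, true_and, mem_setOf_eq] at this
    rw [this]; simp [hg]
  have hga : g a = 0 := (hΩ2' a haV).1 ha
  set Gf : EE n → EE n := fun y => (InnerProductSpace.toDual ℝ (EE n)).symm (fderiv ℝ g y) with hGf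
  have hGfC : ContDiffOn ℝ 1 Gf V := by
    have h1 : ContDiffOn ℝ 1 (fderiv ℝ g) V := hgC.fderiv_of_isOpen hVo (by norm_num)
    exact ((InnerProductSpace.toDual ℝ (EE n)).symm.toContinuousLinearEquiv.contDiff).comp_contDiffOn h1
  have hgd : ∀ y ∈ V, HasFDerivAt g (innerSL ℝ (Gf y)) y := by
    intro y hy
    have h1 : DifferentiableAt ℝ g y := (hgC.differentiableOn (by norm_num)).differentiableAt (hVo.mem_nhds hy)
    have h2 : innerSL ℝ (Gf y) = fderiv ℝ g y := by
      ext v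
      rw [innerSL_apply_apply]
      exact InnerProductSpace.toDual_symm_apply
    rw [h2]; exact h1.hasFDerivAt
  have hGd : ∀ y ∈ V, HasFDerivAt Gf (fderiv ℝ Gf y) y := by
    intro y hy
    exact ((hGfC.differentiableOn (by norm_num)).differentiableAt (hVo.mem_nhds hy)).hasFDerivAt
  set lg : EE n → ℝ := fun y => lap (fderiv ℝ Gf y) with hlg
  have hgj : ∀ y ∈ V, Jet g y (Gf y) (lg y) := by
    intro y hy
    refine ⟨Gf, fderiv ℝ Gf y, ?_, hGd y hy, rfl, rfl⟩
    filter_upwards [hVo.mem_nhds hy] with z hz using hgd z hz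
  have cg : ContinuousAt g a := (hgj a haV).continuousAt
  have cG : ContinuousAt Gf a := (hGd a haV).continuousAt
  have clg : ContinuousAt lg a := by
    have h1 : ContinuousOn (fderiv ℝ Gf) V := hGfC.continuousOn_fderiv_of_isOpen hVo (by norm_num)
    exact continuous_lap.continuousAt.comp (h1.continuousAt (hVo.mem_nhds haV))
  set γ := ‖Gf a‖ with hγ
  have hγ0 : 0 < γ := by
    rw [hγ, norm_pos_iff]
    intro h
    have h1 : fderiv ℝ g a = 0 := by
      have := (hgd a haV).fderiv
      rw [this, h, map_zero]
    apply hf0 a (hεU haV)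
    have h2 : fderiv ℝ g a = -fderiv ℝ f a := fderiv_fun_neg
    rw [h2, neg_eq_zero] at h1
    exact h1
  set k := 2 / γ with hk
  have hk0 : 0 < k := by positivity
  set Q := (lg a + γ) / (2 * γ ^ 2) with hQ
  set e : EE n := γ⁻¹ • Gf a with he
  set ζ : EE n → ℝ := fun y => k * (g y - Q * g y ^ 2) with hζ
  set Z : EE n → EE n := fun y => k • (Gf y - Q • (2 * g y) • Gf y) with hZ
  set l : EE n → ℝ := fun y => k * (lg y - Q * (2 * g y * lg y + 2 * ‖Gf y‖ ^ 2)) with hl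
  have hζj : ∀ y ∈ V, Jet ζ y (Z y) (l y) := fun y hy =>
    ((hgj y hy).sub ((hgj y hy).sq.const_mul Q)).const_mul k
  have hZa : Z a = k • Gf a := by simp [hZ, hga]
  have hla : l a = -2 := by
    simp only [hl, hga, ← hγ, hQ, hk]; field_simp; ring
  have hζa : ζ a = 0 := by simp [hζ, hga]
  have cζ : ContinuousAt ζ a := (hζj a haV).continuousAt
  have hZC : ContDiffOn ℝ 1 Z V := by
    have hg1 : ContDiffOn ℝ 1 g V := hgC.of_le (by norm_num)
    simp only [hZ]
    fun_prop
  have cZ : ContinuousAt Z a := hZC.continuousOn.continuousAt (hVo.mem_nhds haV)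
  have cl : ContinuousAt l a := by
    simp only [hl]; fun_prop
  obtain ⟨K, t, ht, hLip⟩ := (hZC.contDiffAt (hVo.mem_nhds haV)).exists_lipschitzOnWith
  have hen : ‖e‖ = 1 := by rw [he, norm_smul, norm_inv, norm_norm, ← hγ]; field_simp
  have hdir : ⟪Z a, e⟫ = 2 := by
    rw [hZa, he, real_inner_smul_left, real_inner_smul_right, real_inner_self_eq_norm_sq, ← hγ, hk]
    field_simp
  have hZan : ‖Z a‖ = 2 := by
    rw [hZa, norm_smul, Real.norm_of_nonneg hk0.le, ← hγ, hk]; field_simp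
  have e1 : ∀ᶠ y in nhds a, 1 < ⟪Z y, e⟫ := by
    have : ContinuousAt (fun y => ⟪Z y, e⟫) a := cZ.inner continuousAt_const
    exact this.eventually (lt_mem_nhds (by show 1 < ⟪Z a, e⟫; rw [hdir]; norm_num))
  have e2 : ∀ᶠ y in nhds a, ‖Z y‖ < 3 := cZ.norm.eventually (gt_mem_nhds (by show ‖Z a‖ < 3; rw [hZan]; norm_num))
  have e3 : ∀ᶠ y in nhds a, l y < -1 := cl.eventually (gt_mem_nhds (by rw [hla]; norm_num))
  have e4 : ∀ᶠ y in nhds a, -3 < l y := cl.eventually (lt_mem_nhds (by rw [hla]; norm_num))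
  have e5 : ∀ᶠ y in nhds a, ζ y < 1 := cζ.eventually (gt_mem_nhds (by rw [hζa]; norm_num))
  have e6 : ∀ᶠ y in nhds a, Q * g y < 1 := by
    have : ContinuousAt (fun y => Q * g y) a := continuousAt_const.mul cg
    exact this.eventually (gt_mem_nhds (by show Q * g a < 1; rw [hga]; norm_num))
  have e7 : ∀ᶠ y in nhds a, y ∈ V := hVo.mem_nhds haV
  have e8 : ∀ᶠ y in nhds a, y ∈ t := ht
  obtain ⟨ρ, hρ, hall⟩ := Metric.mem_nhds_iff.1
    (e1.and (e2.and (e3.and (e4.and (e5.and (e6.and (e7.and e8)))))))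
  have hall' : ∀ y ∈ ball a ρ, 1 < ⟪Z y, e⟫ ∧ ‖Z y‖ < 3 ∧ l y < -1 ∧ -3 < l y ∧ ζ y < 1 ∧ Q * g y < 1 ∧
    y ∈ V ∧ y ∈ t := fun y hy => hall hy
  refine ⟨ρ, max 3 K, ζ, Z, l, e, ⟨hρ, ?_, hen, hζa, ?_, ?_, ?_, ?_, ?_, ?_, ?_⟩, ?_⟩
  · exact le_trans (by norm_num) (le_max_left _ _)
  · exact fun y hy => hζj y (hall' y hy).2.2.2.2.2.2.1
  · exact fun y hy => (hall' y hy).2.2.1.le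
  · intro y hy
    have := (hall' y hy).2.2.2.1
    have := le_max_left (3 : ℝ) K
    linarith
  · exact fun y hy => (hall' y hy).1.le
  · exact fun y hy => (hall' y hy).2.1.le.trans (le_max_left _ _)
  · intro x hx y hy
    have := hLip.dist_le_mul x (hall' x hx).2.2.2.2.2.2.2 y (hall' y hy).2.2.2.2.2.2.2
    rw [dist_eq_norm, dist_eq_norm] at this
    refine this.trans ?_
    gcongr
    exact le_max_right _ _
  · exact fun y hy => (hall' y hy).2.2.2.2.1.le
  · intro x hx
    have hxV := (hall' x hx).2.2.2.2.2.2.1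
    have hxQ := (hall' x hx).2.2.2.2.2.1
    have hζx : ζ x = k * (1 - Q * g x) * g x := by simp only [hζ]; ring
    have hc : 0 < k * (1 - Q * g x) := mul_pos hk0 (by linarith)
    rw [hΩ1' x hxV, hΩ2' x hxV, hζx]
    exact ⟨(mul_pos_iff_of_pos_left hc).symm, by
      constructor
      · intro h; rw [h, mul_zero]
      · intro h; exact (mul_eq_zero.1 h).resolve_left hc.ne'⟩


section Final
variable {n : ℕ} {a : EE n} {ρ L : ℝ} {ζ : EE n → ℝ} {Z : EE n → EE n}
    {l : EE n → ℝ} {e : EE n} {p β C M : ℝ} {w : EE n → ℝ} {G : EE n → EE n} {f : EE n → ℝ}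

/-- A time slice of the evolution problem is a solution of the stationary problem. -/
lemma slice_sol {Ω : Set (EE n)} (hΩo : IsOpen Ω) (F : BFrame a ρ L ζ Z l e)
    (hF : ∀ x ∈ ball a ρ, (x ∈ Ω ↔ 0 < ζ x) ∧ (x ∈ frontier Ω ↔ ζ x = 0))
    (ha : a ∈ frontier Ω) (hβ0 : 0 < β) {C₀ : ℝ} {H : EE n → (EE n →L[ℝ] EE n)}
    (hw : ContinuousOn w (closure Ω)) (hbd : ∀ b ∈ frontier Ω, w b = 0)
    (hG : ∀ x ∈ Ω, HasGradientAt w (G x) x) (hH : ∀ x ∈ Ω, HasFDerivAt G (H x) x)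
    (hpde : ∀ x ∈ Ω, f x - lap (H x) = ‖G x‖ ^ p) (hf : ∀ x ∈ Ω, |f x| ≤ M)
    (hgr : ∀ x ∈ Ω, ‖G x‖ ≤ C₀ * ((infDist x (frontier Ω)) ^ (-β) + 1)) :
    Sol₀ a (ρ / 2) ζ p β (|C₀| * (L ^ β + 1)) M w G f := by
  have hρ := F.ρ_pos
  have hL := F.L_one
  have hsub : ball a (ρ / 2) ⊆ ball a ρ := ball_subset_ball (by linarith)
  refine ⟨?_, ?_, ?_, ?_, ?_⟩
  · refine hw.mono ?_
    rintro x ⟨hx, h0⟩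
    have h := hF x (hsub hx)
    rcases h0.eq_or_lt with h1 | h1
    · exact frontier_subset_closure (h.2.2 h1.symm)
    · exact subset_closure (h.1.2 h1)
  · intro x hx h0
    exact hbd x ((hF x (hsub hx)).2.2 h0)
  · intro x hx h0
    have hxΩ := (hF x (hsub hx)).1.2 h0
    refine ⟨G, H x, ?_, hH x hxΩ, rfl, by linarith [hpde x hxΩ]⟩
    filter_upwards [hΩo.mem_nhds hxΩ] with y hy
    exact (hG y hy).hasFDerivAt
  · intro x hx h0
    exact hf x ((hF x (hsub hx)).1.2 h0)
  · intro x hx h0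
    have hxΩ := (hF x (hsub hx)).1.2 h0
    obtain ⟨b, hb, hd⟩ := (isClosed_frontier (s := Ω)).exists_infDist_eq_dist ⟨a, ha⟩ x
    have hda : dist x b ≤ dist x a := by rw [← hd]; exact infDist_le_dist_of_mem ha
    rw [mem_ball] at hx
    have hbρ : b ∈ ball a ρ := by
      rw [mem_ball]
      have := dist_triangle b x a
      rw [dist_comm b x] at this
      linarith
    have hxρ : x ∈ ball a ρ := by rw [mem_ball]; linarith
    have hζ := F.le_L hxρ hbρ ((hF b hbρ).2.1 hb)
    rw [← dist_eq_norm, ← hd] at hζ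
    set D := infDist x (frontier Ω) with hD
    have hL0 : 0 < L := by linarith
    have hD0 : 0 < D := by
      by_contra h
      have : L * D ≤ 0 := mul_nonpos_of_nonneg_of_nonpos hL0.le (not_lt.1 h)
      linarith
    have h1 : D ^ (-β) ≤ L ^ β * ζ x ^ (-β) := by
      have h2 : ζ x / L ≤ D := by rw [div_le_iff₀ hL0]; linarith
      have h3 := Real.rpow_le_rpow_of_nonpos (by positivity) h2 (by linarith : -β ≤ 0)
      rw [Real.div_rpow h0.le hL0.le, Real.rpow_neg hL0.le, div_inv_eq_mul] at h3
      linarith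
    have h2 : 1 ≤ ζ x ^ (-β) :=
      Real.one_le_rpow_of_pos_of_le_one_of_nonpos h0 (F.le_one x hxρ) (by linarith)
    have h3 : 0 ≤ D ^ (-β) := by positivity
    calc ‖G x‖ ≤ C₀ * (D ^ (-β) + 1) := hgr x hxΩ
      _ ≤ |C₀| * (D ^ (-β) + 1) := by gcongr; exact le_abs_self _
      _ ≤ |C₀| * (L ^ β * ζ x ^ (-β) + ζ x ^ (-β)) := by gcongr
      _ = |C₀| * (L ^ β + 1) * ζ x ^ (-β) := by ring

set_option maxHeartbeats 1000000 in
/-- All the quantitative consequences needed, at each small scale `r`. -/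
lemma quantitative (F : BFrame a ρ L ζ Z l e) (hβ0 : 0 < β) (hβ1 : β < 1) (hp : 2 < p)
    (hβp : β * p = 1 + β) (hC : 0 ≤ C) (hM : 0 ≤ M) {K : ℝ} (hK : 0 < K) :
    ∃ r₀ > 0, ∀ r, 0 < r → r < r₀ → ∃ s > 0, ∃ m' > 0, ∃ CB ≥ 0, CB * L ≤ K * r ^ (-β) ∧
      (∀ (w : EE n → ℝ) (G : EE n → EE n) (f : EE n → ℝ), Sol a ρ ζ p β C M w G f →
        ∀ y₁ y₂ : EE n, ‖y₁ - a‖ ≤ 2 * r → ‖y₂ - a‖ ≤ 2 * r → ζ y₁ = s → ζ y₂ = s →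
          w y₁ ≤ m' → w y₂ ≤ 2 * m') ∧
      (∃ B, ∃ η > 0, ∀ (w : EE n → ℝ) (G : EE n → EE n) (f : EE n → ℝ),
        Sol a ρ ζ p β C M w G f → ContinuousOn G {x | x ∈ ball a ρ ∧ 0 < ζ x} →
        (∀ x, ‖x - a‖ ≤ 2 * r → ζ x = s → w x ≤ 3 * m') →
        ∀ x ∈ ball a η, 0 < ζ x → ‖G x‖ ≤ B) ∧
      (∀ (w : EE n → ℝ) (G : EE n → EE n) (f : EE n → ℝ), Sol a ρ ζ p β C M w G f →
        (∀ x, ‖x - a‖ ≤ 2 * r → ζ x = s → m' ≤ w x) →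
        ∀ x₀, ‖x₀ - a‖ = r → ζ x₀ = 0 → ∀ x, ‖x - x₀‖ ≤ r → 0 ≤ ζ x → ζ x ≤ s →
          0 ≤ ζ x - s / r ^ 2 * ‖x - x₀‖ ^ 2 →
          2 * K * r ^ (-β) * (ζ x - s / r ^ 2 * ‖x - x₀‖ ^ 2) ≤ w x + CB * ζ x) := by
  have hρ := F.ρ_pos
  have hL := F.L_one
  have hL0 : 0 < L := by linarith
  obtain ⟨CB, hCB, hlow⟩ := lower_barrier (p := p) F hβ0 hβ1 hC hM
  -- choice of `m`
  obtain ⟨m₀, hm₀, hm₁⟩ := exists_of_eventually_pos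
    (((tendsto_rpow_zero (by linarith : 0 < p - 1)).const_mul ((7 * L) ^ p)).eventually
      (gt_mem_nhds (by rw [mul_zero]; exact one_pos)))
  obtain ⟨m, hm, hmm⟩ : ∃ m > 0, (7 * L * m) ^ p ≤ m := by
    refine ⟨m₀ / 2, by positivity, ?_⟩
    have h1 := hm₁ (m₀ / 2) (by positivity) (by linarith)
    have hm2 : 0 < m₀ / 2 := by positivity
    rw [Real.mul_rpow (by positivity) hm2.le]
    have h2 : (m₀ / 2) ^ p = (m₀ / 2) ^ (p - 1) * (m₀ / 2) := by
      rw [← Real.rpow_add_one hm2.ne']; congr 1; ring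
    rw [h2, ← mul_assoc]
    nlinarith
  -- choice of `κ`
  have c0 : ∀ g : ℝ → ℝ, Continuous g → g 0 = 0 → ∀ c > 0,
      ∀ᶠ κ in nhdsWithin (0 : ℝ) (Ioi 0), g κ < c := by
    intro g hg h0 c hc
    have := hg.tendsto 0
    rw [h0] at this
    exact (this.mono_left nhdsWithin_le_nhds).eventually (gt_mem_nhds hc)
  obtain ⟨κ₀, hκ₀, hκ₁⟩ := exists_of_eventually_pos
    ((c0 (fun κ => 8 * n * C * κ ^ 2) (by fun_prop) (by simp) m hm).and
    ((c0 (fun κ => 4 * C * κ) (by fun_prop) (by simp) (m * L) (by positivity)).and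
    ((c0 (fun κ => 12 * (2 * n * κ ^ 2)) (by fun_prop) (by simp) (1 / 2) (by norm_num)).and
    ((c0 (fun κ => κ) continuous_id rfl (1 / 4) (by norm_num)).and
    ((tendsto_rpow_neg_zero (by linarith : -β < 0)).eventually_ge_atTop (4 * K / m))))))
  obtain ⟨k1, k2, k3, k4, k5⟩ := hκ₁ (κ₀ / 2) (by positivity) (by linarith)
  set κ := κ₀ / 2 with hκd
  have hκ : 0 < κ := by positivity
  -- choice of `r₀`
  have htr := translation (p := p) F hβ0 hβ1 hp.le hβp hC hM
    (by positivity : 0 < m * κ ^ (1 - β))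
  have hsc := tendsto_mul_zero_right hκ
  have hbig := (tendsto_rpow_neg_zero (by linarith : -1 - β < 0)).comp hsc
  obtain ⟨r₀, hr₀, hr₁⟩ := exists_of_eventually_pos
    (htr.and ((hbig.eventually_gt_atTop (8 * M / m)).and
    ((c0 (fun r => 12 * (L * (κ * r))) (by fun_prop) (by simp) (1 / 2) (by norm_num)).and
    ((c0 (fun r => 2 * r) (by fun_prop) (by simp) (ρ / (4 * L)) (by positivity)).and
    ((tendsto_rpow_neg_zero (by linarith : -β < 0)).eventually_ge_atTop (CB * L / K))))))
  refine ⟨r₀, hr₀, ?_⟩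
  intro r hr hrr
  obtain ⟨q1, q2, q3, q4, q5⟩ := hr₁ r hr hrr
  simp only [Function.comp] at q2
  have hs : 0 < κ * r := by positivity
  have hq2 : M < m * (κ * r) ^ (-1 - β) / 8 := by
    rw [div_lt_iff₀ hm] at q2; linarith
  have h4L : ρ / (4 * L) ≤ ρ := div_le_self hρ.le (by linarith)
  have hms : m * κ ^ (1 - β) * r ^ (1 - β) = m * (κ * r) ^ (1 - β) := by
    rw [Real.mul_rpow hκ.le hr.le]; ring
  refine ⟨κ * r, hs, m * (κ * r) ^ (1 - β), by positivity, CB, hCB, ?_, ?_, ?_, ?_⟩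
  · rw [div_le_iff₀ hK] at q5; linarith
  · intro w G f S y₁ y₂ h1 h2 h3 h4 h5
    have := q1 w G f S y₁ y₂ h1 h2 (by rw [h3]; exact hs) (by rw [h3]; nlinarith) (by rw [h3, h4])
    rw [hms] at this
    linarith
  · obtain ⟨A, hA, η, hη, hup⟩ := upper_linear (M := M) F hβ0 hβ1 (by linarith : 1 ≤ p) hβp hC hr hκ
      hm rfl hmm k1.le k2.le (by
        have : 0 < m * (κ * r) ^ (-1 - β) := by positivity
        linarith) (by linarith)
    refine ⟨4 * n * (3 * L * (A + CB)) * (1 + C ^ (p - 1)) + (M + 1),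
      min η (ρ / (4 * L)) / 2, by positivity, ?_⟩
    intro w G f S hGc hlev
    refine grad_bound F hβ0 hp hβp hC hM S hGc (by positivity)
      ((min_le_right _ _).trans h4L) ?_
    intro x hx h0
    have h1 := hup w G f S (fun y hy h => by
      rw [mem_closedBall, dist_eq_norm] at hy
      have := hlev y (by linarith) h
      linarith) x (ball_subset_ball (min_le_left _ _) hx) h0
    have h2 := hlow w G f S x (ball_subset_ball (min_le_right _ _) hx) h0
    rw [abs_le]
    constructor
    · nlinarith [mul_nonneg hA h0.le]
    · nlinarith [mul_nonneg hCB h0.le]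
  · intro w G f S hlev x₀ hx₀ hζ₀ x hx h0 h1 h2
    have hin : ∀ y ∈ closedBall x₀ r, ‖y - a‖ ≤ 2 * r := by
      intro y hy
      rw [mem_closedBall, dist_eq_norm] at hy
      have : y - a = (y - x₀) + (x₀ - a) := by abel
      rw [this]
      refine (norm_add_le _ _).trans ?_
      linarith
    have hin4 : closedBall x₀ r ⊆ ball a (ρ / (4 * L)) := by
      intro y hy
      rw [mem_ball, dist_eq_norm]
      exact (hin y hy).trans_lt q4
    have := hopf_core F hβ0 hβ1 hr hκ k4.le hm hCB rfl (by linarith) hq2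
      (hin4.trans (ball_subset_ball h4L)) hζ₀ S (fun y hy => hlow w G f S y (hin4 hy))
      (fun y hy h => hlev y (hin y hy) h) x (by rw [mem_closedBall, dist_eq_norm]; exact hx) h0 h1 h2
    refine le_trans ?_ this
    refine mul_le_mul_of_nonneg_right ?_ h2
    rw [Real.mul_rpow hκ.le hr.le]
    rw [div_le_iff₀ hm] at k5
    have hrb : 0 < r ^ (-β) := by positivity
    have h5 := mul_le_mul_of_nonneg_right k5 hrb.le
    calc 2 * K * r ^ (-β) = 4 * K * r ^ (-β) / 2 := by ring
      _ ≤ κ ^ (-β) * m * r ^ (-β) / 2 := by linarith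
      _ = m * (κ ^ (-β) * r ^ (-β)) / 2 := by ring

end Final

set_option maxHeartbeats 1000000 in
theorem stmt8 {n : ℕ} (hn : 1 ≤ n)
    -- the exponents and constants
    (p β cp dp : ℝ) (hp : 2 < p) (hβ : β = 1 / (p - 1))
    (hcp : cp = β ^ β / (1 - β)) (hdp : dp = β ^ β)
    -- the bounded domain Ω with C² boundary
    (Ω : Set (EuclideanSpace ℝ (Fin n))) (hΩo : IsOpen Ω) (hΩb : Bornology.IsBounded Ω) (hΩc2 : IsC2Boundary Ω)
    -- the distance to the boundary
    (δ : EuclideanSpace ℝ (Fin n) → ℝ) (hδ : ∀ x, δ x = infDist x (frontier Ω))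
    -- δ₀ and the boundary neighborhood Ωδ = {x ∈ Ω : δ(x) < δ₀}
    (δ₀ : ℝ) (hδ₀ : 0 < δ₀)
    (Ωδ : Set (EuclideanSpace ℝ (Fin n))) (hΩδ : Ωδ = {x ∈ Ω | δ x < δ₀})
    -- δ is C² on Ωδ
    (hδC2 : ContDiffOn ℝ 2 δ Ωδ)
    -- every x ∈ Ωδ has a unique nearest boundary point P x
    (P : EuclideanSpace ℝ (Fin n) → EuclideanSpace ℝ (Fin n))
    (hP : ∀ x ∈ Ωδ, P x ∈ frontier Ω ∧ dist x (P x) = δ x ∧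
      ∀ b ∈ frontier Ω, dist x b = δ x → b = P x)
    -- interior sphere condition of radius δ₀ at every boundary point
    (hsph : ∀ b ∈ frontier Ω, ∃ y, ball y δ₀ ⊆ Ω ∧ dist y b = δ₀)
    -- the inward unit normal field ν
    (ν : EuclideanSpace ℝ (Fin n) → EuclideanSpace ℝ (Fin n))
    (hν1 : ∀ b ∈ frontier Ω, ‖ν b‖ = 1 ∧
      ∀ s ∈ Ioo (0 : ℝ) δ₀, b + s • ν b ∈ Ω ∧ δ (b + s • ν b) = s)
    (hν2 : ∀ x ∈ Ωδ, ν x = ν (P x) ∧ HasGradientAt δ (ν x) x)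
    -- the solution u on [0,T], with spatial gradient G, spatial Hessian H and
    -- time derivative
    (T : ℝ) (hT : 0 < T)
    (u : EuclideanSpace ℝ (Fin n) → ℝ → ℝ)
    (G : EuclideanSpace ℝ (Fin n) → ℝ → EuclideanSpace ℝ (Fin n))
    (H : EuclideanSpace ℝ (Fin n) → ℝ → (EuclideanSpace ℝ (Fin n) →L[ℝ] EuclideanSpace ℝ (Fin n)))
    (u' : EuclideanSpace ℝ (Fin n) → ℝ → ℝ)
    -- u is continuous on Ω̄ × [0,T] and vanishes on ∂Ω × [0,T]
    (hu_cont : ContinuousOn (fun q : EuclideanSpace ℝ (Fin n) × ℝ => u q.1 q.2) (closure Ω ×ˢ Icc 0 T))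
    (hu_bd : ∀ b ∈ frontier Ω, ∀ t ∈ Icc (0 : ℝ) T, u b t = 0)
    -- u is continuously differentiable in x on Ω̄ × [0,T), with spatial gradient G
    (hG : ∀ t ∈ Ico (0 : ℝ) T, ∀ x ∈ closure Ω,
      HasGradientWithinAt (fun y => u y t) (G x t) (closure Ω) x)
    (hG_cont : ContinuousOn (fun q : EuclideanSpace ℝ (Fin n) × ℝ => G q.1 q.2) (closure Ω ×ˢ Ico 0 T))
    -- on Ω × (0,T], u has spatial gradient G, spatial Hessian H and time derivative,
    -- all continuous there
    (hG2 : ∀ t ∈ Ioc (0 : ℝ) T, ∀ x ∈ Ω, HasGradientAt (fun y => u y t) (G x t) x)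
    (hH : ∀ t ∈ Ioc (0 : ℝ) T, ∀ x ∈ Ω, HasFDerivAt (fun y => G y t) (H x t) x)
    (hu' : ∀ t ∈ Ioc (0 : ℝ) T, ∀ x ∈ Ω, HasDerivAt (fun s => u x s) (u' x t) t)
    (hreg : ContinuousOn (fun q : EuclideanSpace ℝ (Fin n) × ℝ =>
      (u q.1 q.2, G q.1 q.2, H q.1 q.2, u' q.1 q.2)) (Ω ×ˢ Ioc 0 T))
    -- the PDE uₜ - Δu = |∇u|^p on Ω × (0,T]
    (hPDE : ∀ t ∈ Ioc (0 : ℝ) T, ∀ x ∈ Ω,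
      u' x t - ∑ i : Fin n, ⟪H x t (EuclideanSpace.single i (1 : ℝ)),
        EuclideanSpace.single i (1 : ℝ)⟫ = ‖G x t‖ ^ p)
    -- a priori bounds: |uₜ| ≤ M on Ω × [T/2,T] and the Bernstein estimate
    (M : ℝ) (hM : ∀ x ∈ Ω, ∀ t ∈ Icc (T / 2) T, |u' x t| ≤ M)
    (C₀ : ℝ) (hC₀ : ∀ x ∈ Ω, ∀ t ∈ Ico (0 : ℝ) T, ‖G x t‖ ≤ C₀ * ((δ x) ^ (-β) + 1))
    -- a ∈ ∂Ω is a gradient blow-up point: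
    -- limsup of |∇u(x,t)| as t → T⁻, x → a equals ∞
    (a : EuclideanSpace ℝ (Fin n)) (ha : a ∈ frontier Ω)
    (hGBU : ∀ K : ℝ, ∀ η > 0, ∃ x ∈ Ω, ∃ t ∈ Ioo (T - η) T,
      0 < t ∧ dist x a < η ∧ K ≤ ‖G x t‖)
    :
    ∀ K > 0, ∃ η > 0, ∀ x ∈ frontier Ω, x ≠ a → dist x a < η →
      ((K * (dist x a) ^ (-β) : ℝ) : EReal) ≤
        Filter.liminf (fun t => ((⟪G x t, ν x⟫ : ℝ) : EReal)) (nhdsWithin T (Iio T)) := by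
  have hβ0 : 0 < β := by rw [hβ]; apply div_pos one_pos; linarith
  have hβ1 : β < 1 := by rw [hβ, div_lt_one (by linarith)]; linarith
  have hβp : β * p = 1 + β := by
    have h1 : p - 1 ≠ 0 := by linarith
    rw [hβ]; field_simp; ring
  intro K hK
  obtain ⟨ρ, L, ζ, Z, l, e, F, hF⟩ := exists_frame hΩo hΩc2 ha
  have hρ := F.ρ_pos
  have hL := F.L_one
  have hL0 : 0 < L := by linarith
  set ρ₁ : ℝ := ρ / 2 / (4 * L) with hρ₁
  have hρ₁0 : 0 < ρ₁ := by positivity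
  have hρ₁ρ : ρ₁ ≤ ρ / 2 := div_le_self (by positivity) (by linarith)
  have hρ₁4 : ρ / (4 * L) = 2 * ρ₁ := by rw [hρ₁]; field_simp
  have hM0 : 0 ≤ |M| := abs_nonneg M
  set C : ℝ := |C₀| * (L ^ β + 1) with hCdef
  have hC : 0 ≤ C := by positivity
  have hβ' : 0 < 1 - β := by linarith
  have hC1 : 0 ≤ C / (1 - β) := by positivity
  have F₁ : BFrame a ρ₁ L ζ Z l e := F.mono hρ₁0 (by linarith)
  have hS : ∀ t, T / 2 ≤ t → t < T →
      Sol a ρ₁ ζ p β (C / (1 - β)) |M| (fun y => u y t) (fun y => G y t) (fun y => u' y t) := by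
    intro t ht1 ht2
    have htc : t ∈ Ioc (0 : ℝ) T := ⟨by linarith, ht2.le⟩
    have S₀ : Sol₀ a (ρ / 2) ζ p β C |M| (fun y => u y t) (fun y => G y t) (fun y => u' y t) := by
      refine slice_sol (H := fun y => H y t) hΩo F hF ha hβ0 ?_ ?_ ?_ ?_ ?_ ?_ ?_
      · exact hu_cont.comp (f := fun y => (y, t)) (by fun_prop)
          (fun y hy => ⟨hy, htc.1.le, htc.2⟩)
      · exact fun b hb => hu_bd b hb t ⟨htc.1.le, htc.2⟩
      · exact fun y hy => hG2 t htc y hy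
      · exact fun y hy => hH t htc y hy
      · exact fun y hy => hPDE t htc y hy
      · exact fun y hy => (hM y hy t ⟨ht1, ht2.le⟩).trans (le_abs_self M)
      · intro y hy
        rw [← hδ]
        exact hC₀ y hy t ⟨htc.1.le, ht2⟩
    exact S₀.toSol (F.mono (by linarith) (by linarith)) hβ0 hβ1 hC
  have hGc : ∀ t, T / 2 ≤ t → t < T →
      ContinuousOn (fun y => G y t) {x | x ∈ ball a ρ₁ ∧ 0 < ζ x} := by
    intro t ht1 ht2 y hy
    have hyΩ : y ∈ Ω := (hF y (ball_subset_ball (by linarith) hy.1)).1.2 hy.2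
    exact (hH t ⟨by linarith, ht2.le⟩ y hyΩ).continuousAt.continuousWithinAt
  obtain ⟨r₀, hr₀, hq⟩ := quantitative F₁ hβ0 hβ1 hp hβp hC1 hM0 hK
  refine ⟨min r₀ ρ₁, by positivity, ?_⟩
  intro x hx hxa hxη
  rw [lt_min_iff] at hxη
  obtain ⟨hxr, hxρ⟩ := hxη
  set r := dist x a with hr
  have hr0 : 0 < r := dist_pos.2 hxa
  have hrn : ‖x - a‖ = r := by rw [hr, dist_eq_norm]
  have hxb : x ∈ ball a ρ := by rw [mem_ball]; linarith
  have hζx : ζ x = 0 := (hF x hxb).2.1 hx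
  obtain ⟨s, hs, m', hm', CB, hCB, hCBL, hA, ⟨B, η', hη', hB⟩, hD⟩ := hq r hr0 hxr
  set τ₀ : ℝ := min (T / 2) (m' / (|M| + 1)) with hτ₀
  have hτ₀0 : 0 < τ₀ := by positivity
  have hτ₀T : τ₀ ≤ T / 2 := min_le_left _ _
  have hτ₀M : |M| * τ₀ ≤ m' := by
    have h1 : τ₀ ≤ m' / (|M| + 1) := min_le_right _ _
    rw [le_div_iff₀ (by positivity)] at h1
    nlinarith
  have htime : ∀ y ∈ Ω, ∀ t₁ ∈ Ioo (T - τ₀) T, ∀ t₂ ∈ Ioo (T - τ₀) T, u y t₂ ≤ u y t₁ + m' := by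
    intro y hy t₁ ht₁ t₂ ht₂
    have h := Convex.norm_image_sub_le_of_norm_hasDerivWithin_le (𝕜 := ℝ) (f := fun t => u y t)
      (f' := fun t => u' y t) (C := |M|) (s := Ioo (T - τ₀) T) (x := t₁) (y := t₂)
      (fun t ht => (hu' t ⟨by linarith [ht.1], ht.2.le⟩ y hy).hasDerivWithinAt)
      (fun t ht => by
        rw [Real.norm_eq_abs]
        exact (hM y hy t ⟨by linarith [ht.1], ht.2.le⟩).trans (le_abs_self M))
      (convex_Ioo _ _) ht₁ ht₂
    rw [Real.norm_eq_abs, Real.norm_eq_abs] at h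
    have h1 : |t₂ - t₁| ≤ τ₀ := by
      rw [abs_le]; constructor <;> linarith [ht₁.1, ht₁.2, ht₂.1, ht₂.2]
    have h2 : |M| * |t₂ - t₁| ≤ |M| * τ₀ := by gcongr
    linarith [le_abs_self (u y t₂ - u y t₁)]
  have hlevΩ : ∀ y, ‖y - a‖ ≤ 2 * r → ζ y = s → y ∈ Ω := by
    intro y hy hys
    refine (hF y ?_).1.2 (by rw [hys]; exact hs)
    rw [mem_ball, dist_eq_norm]
    linarith
  have hclaim : ∀ t ∈ Ioo (T - τ₀) T, ∀ y, ‖y - a‖ ≤ 2 * r → ζ y = s → m' ≤ u y t := by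
    by_contra hcon
    push Not at hcon
    obtain ⟨t, ht, y₁, hy₁, hy₁s, hlt⟩ := hcon
    obtain ⟨y, hy, t', ht', -, hyd, hbig⟩ := hGBU (B + 1) (min (min η' ρ₁) τ₀) (by positivity)
    have g1 : dist y a < η' := hyd.trans_le ((min_le_left _ _).trans (min_le_left _ _))
    have g2 : dist y a < ρ₁ := hyd.trans_le ((min_le_left _ _).trans (min_le_right _ _))
    have g3 : min (min η' ρ₁) τ₀ ≤ τ₀ := min_le_right _ _
    have ht'' : t' ∈ Ioo (T - τ₀) T := ⟨by linarith [ht'.1], ht'.2⟩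
    have hT' : T / 2 ≤ t' := by linarith [ht''.1]
    have hyζ : 0 < ζ y := (hF y (by rw [mem_ball]; linarith)).1.1 hy
    have := hB _ _ _ (hS t' hT' ht''.2) (hGc t' hT' ht''.2) (by
      intro z hz hzs
      have h1 := hA _ _ _ (hS t (by linarith [ht.1]) ht.2) y₁ z hy₁ hz hy₁s hzs hlt.le
      have h2 := htime z (hlevΩ z hz hzs) t ht t' ht''
      beta_reduce at h1 ⊢
      linarith) y (by rw [mem_ball]; exact g1) hyζ
    linarith
  have hmain : ∀ t ∈ Ioo (T - τ₀) T, K * r ^ (-β) ≤ ⟪G x t, ν x⟫ := by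
    intro t ht
    have hT2 : T / 2 ≤ t := by linarith [ht.1]
    obtain ⟨hν, hνδ⟩ := hν1 x hx
    have hxc : x ∈ closure Ω := frontier_subset_closure hx
    have hline : HasDerivAt (fun τ : ℝ => x + τ • ν x) (ν x) 0 := by
      simpa using ((hasDerivAt_id (0 : ℝ)).smul_const (ν x)).const_add x
    have hgr := hG t ⟨by linarith, ht.2⟩ x hxc
    have hgr' : HasFDerivWithinAt (fun y => u y t) (innerSL ℝ (G x t)) (closure Ω)
        (x + (0 : ℝ) • ν x) := by
      rw [zero_smul, add_zero]; exact hgr.hasFDerivWithinAt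
    have hd1 : HasDerivWithinAt (fun τ : ℝ => u (x + τ • ν x) t) ⟪G x t, ν x⟫ (Ioo 0 δ₀) 0 := by
      have := hgr'.comp_hasDerivWithinAt (0 : ℝ) (hline.hasDerivWithinAt (s := Ioo 0 δ₀))
        (fun τ hτ => subset_closure (hνδ τ hτ).1)
      rw [innerSL_apply_apply] at this
      exact this
    have hd2 : HasDerivWithinAt (fun τ : ℝ => u (x + τ • ν x) t) ⟪G x t, ν x⟫ (Ioi 0) 0 :=
      hd1.mono_of_mem_nhdsWithin (Ioo_mem_nhdsGT hδ₀)
    set k := 2 * K * r ^ (-β) with hk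
    set q := s / r ^ 2 with hqd
    have hk0 : 0 < k := by positivity
    have hq0 : 0 < q := by positivity
    have hd3 : HasDerivAt (fun τ : ℝ => k * (τ - q * τ ^ 2) - CB * L * τ) (k - CB * L) 0 := by
      have h1 : HasDerivAt (fun τ : ℝ => τ) 1 (0 : ℝ) := hasDerivAt_id 0
      have h2 := ((h1.sub ((h1.pow 2).const_mul q)).const_mul k).sub (h1.const_mul (CB * L))
      refine h2.congr_deriv ?_
      simp
    have hd4 := hd2.sub hd3.hasDerivWithinAt
    have := deriv_nonneg_of_right hd4 (by simp [hu_bd x hx t ⟨by linarith, ht.2.le⟩]) (by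
      filter_upwards [self_mem_nhdsWithin, Ioo_mem_nhdsGT hδ₀, Ioo_mem_nhdsGT hr0,
        Ioo_mem_nhdsGT (by positivity : 0 < s / L), Ioo_mem_nhdsGT (by positivity : 0 < 1 / q),
        Ioo_mem_nhdsGT hρ₁0] with τ hτ0 h1 h2 h3 h4 h5
      replace hτ0 : 0 < τ := hτ0
      replace h2 := h2.2
      replace h3 := h3.2
      replace h4 := h4.2
      replace h5 := h5.2
      obtain ⟨hyΩ, hyδ⟩ := hνδ τ h1
      set y := x + τ • ν x with hy
      have hyx : ‖y - x‖ = τ := by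
        rw [hy, add_sub_cancel_left, norm_smul, hν, mul_one, Real.norm_of_nonneg hτ0.le]
      have hya : ‖y - a‖ < ρ / (4 * L) := by
        have : y - a = (y - x) + (x - a) := by abel
        rw [this]
        refine (norm_add_le _ _).trans_lt ?_
        rw [hyx, hrn, hρ₁4]; linarith
      have hyρ : y ∈ ball a ρ := by
        rw [mem_ball, dist_eq_norm]
        exact hya.trans_le (div_le_self hρ.le (by linarith))
      have hyζ : 0 < ζ y := (hF y hyρ).1.1 hyΩ
      obtain ⟨b, -, -, -, -, hb0, hyb, hba, -⟩ := F.foot hya hyζ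
      have hbf : b ∈ frontier Ω := by
        refine (hF b ?_).2.2 hb0
        rw [mem_ball, dist_eq_norm]; linarith
      have hτζ : τ ≤ ζ y := by
        have h6 : infDist y (frontier Ω) ≤ dist y b := infDist_le_dist_of_mem hbf
        rw [← hδ, hyδ, dist_eq_norm] at h6
        linarith
      have hζτ : ζ y ≤ L * τ := by
        have := F.le_L hyρ hxb hζx
        rwa [hyx] at this
      rw [lt_div_iff₀ hL0] at h3
      rw [lt_div_iff₀ hq0] at h4
      have hqτ : q * τ ^ 2 ≤ τ := by
        calc q * τ ^ 2 = τ * q * τ := by ring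
          _ ≤ 1 * τ := by gcongr
          _ = τ := one_mul τ
      have h7 := hD _ _ _ (hS t hT2 ht.2) (hclaim t ht) x hrn hζx y (by rw [hyx]; exact h2.le)
        hyζ.le (by linarith) (by rw [hyx]; linarith)
      rw [hyx] at h7
      have h8 : k * (τ - q * τ ^ 2) ≤ k * (ζ y - q * τ ^ 2) := by gcongr
      have h9 : CB * ζ y ≤ CB * (L * τ) := by gcongr
      simp only [Pi.sub_apply] at h7 ⊢
      linarith)
    linarith
  refine Filter.le_liminf_of_le (by isBoundedDefault) ?_
  filter_upwards [Ioo_mem_nhdsLT (by linarith : T - τ₀ < T)] with t ht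
  exact EReal.coe_le_coe_iff.2 (hmain t ht)
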